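/- Let G be a graph and λ a positive integer with connectivity κ ≥ λ + 1. Then either the circumference satisfies c ≥ (λ+1)(δ−λ+1), or every longest cycle in G is a CD_{min{λ, δ−λ}}-cycle. -/

import Mathlib

open SimpleGraph

variable {V : Type*}

/-- `G` is `k`-connected: more than `k` vertices and removing fewer than `k`
vertices leaves a connected graph. -/
def KConnected (G : SimpleGraph V) [Fintype V] (k : ℕ) : Prop :=
  k < Fintype.card V ∧
    ∀ S : Finset V, S.card < k → (G.induce ((↑S : Set V)ᶜ)).Connected

/-- vertex connectivity `κ`. -/
noncomputable def connectivity (G : SimpleGraph V) [Fintype V] : ℕ :=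
  sSup {k | KConnected G k}

/-- independence number `α`. -/
noncomputable def indepNumber (G : SimpleGraph V) [Fintype V] : ℕ :=
  sSup {k | ∃ s : Finset V, (∀ u ∈ s, ∀ v ∈ s, ¬ G.Adj u v) ∧ s.card = k}

/-- circumference `c`: length of a longest cycle. -/
noncomputable def circumference (G : SimpleGraph V) [Fintype V] : ℕ :=
  sSup {n | ∃ (v : V) (w : G.Walk v v), w.IsCycle ∧ w.length = n}

/-- `w` is a longest cycle of `G`. -/
def IsLongestCycle {G : SimpleGraph V} {v : V} (w : G.Walk v v) : Prop :=
  w.IsCycle ∧ ∀ (u : V) (w' : G.Walk u u), w'.IsCycle → w'.length ≤ w.length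

/-- dominating cycle: every edge has an endpoint on the cycle. -/
def IsDominatingCycle {G : SimpleGraph V} {v : V} (w : G.Walk v v) : Prop :=
  w.IsCycle ∧ ∀ x y, G.Adj x y → x ∈ w.support ∨ y ∈ w.support

/-- generalized cycle of length `n` with vertex set `W`: single vertices are
cycles of length 1, edges are cycles of length 2. -/
def ExtCycle (G : SimpleGraph V) (W : Set V) (n : ℕ) : Prop :=
  (n = 1 ∧ ∃ v : V, W = {v}) ∨
  (n = 2 ∧ ∃ u v : V, G.Adj u v ∧ W = {u, v}) ∨
  (3 ≤ n ∧ ∃ (v : V) (w : G.Walk v v), w.IsCycle ∧ w.length = n ∧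
      W = {x | x ∈ w.support})

/-- `p̄`: the length of a longest path in `G \ C`. -/
noncomputable def pathBar (G : SimpleGraph V) [Fintype V] {v : V} (w : G.Walk v v) : ℕ :=
  sSup {n | ∃ (a b : {x : V | x ∉ w.support})
      (p : (G.induce {x : V | x ∉ w.support}).Walk a b), p.IsPath ∧ p.length = n}

/-- `c̄`: the length of a longest (generalized) cycle in `G \ C`. -/
noncomputable def cycBar (G : SimpleGraph V) [Fintype V] {v : V} (w : G.Walk v v) : ℕ :=
  sSup {n | ∃ W, ExtCycle (G.induce {x : V | x ∉ w.support}) W n}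

/-- `CD_m`-cycle: every (generalized) cycle of length at least `m` meets `w`. -/
def IsCDCycle (G : SimpleGraph V) {v : V} (w : G.Walk v v) (m : ℕ) : Prop :=
  w.IsCycle ∧ ∀ (W : Set V) (n : ℕ), ExtCycle G W n → m ≤ n → ∃ x ∈ W, x ∈ w.support

/-!
Let `C` be a longest cycle and `H` the set of vertices off `C`. Given `Z ⊆ H`, choose `Ω` with
`Z ⊆ Ω ⊆ H` and fewest outside neighbours. Fewer than `|∂Ω|` vertices then never separate `∂Ω`
from `C`, so Menger's theorem joins `∂Ω` to `C` by disjoint paths, and every path through `Ω`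
between two vertices of `∂Ω` extends to an ear of `C`. Maximality of `C` makes each arc of `C` at
least as long as every ear with the same ends, and adding up the arcs between consecutive feet
bounds `|C|` from below.

Two choices of `Z` are needed. If `Z` is linked of order `d`, meaning that any two of its vertices
are joined inside `Z` by a path of length at least `d`, then entering and leaving `Z` at distinct
vertices gives ears of length `d + 2`, and `|C| ≥ ν (d + 2)` whenever `ν ≤ |∂Ω'|` for all nonempty
`Ω' ⊆ H`. Pósa rotations turn minimum degree into linked sets, so that for the largest order `d`
one may take `ν = δ - d`. If `H` has only linked sets of small order but a long cycle, let `Z` be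
a longest cycle `Q` of `H`: any two vertices of `Q` are half of `Q` apart along one arc, and
crossing chords produce longer paths unless degrees in `Q` are small, in which case the minimum
degree forces many entrances from `∂Ω` to `Q`.
-/

namespace CDCycle

/-! ### Walks as lists of vertices -/

section ListWalk

/-- A walk of `G` from `a` to `b`, encoded as the list of its vertices so that walks can be cut
and pasted by `++`. -/
structure IsListWalk (G : SimpleGraph V) (a b : V) (l : List V) : Prop where
  chain : l.IsChain G.Adj
  head : l.head? = some a
  last : l.getLast? = some b

variable {G H : SimpleGraph V} {a b c d x : V} {l m : List V}

theorem exists_first_append {p : V → Prop} (h : ∃ x ∈ l, p x) :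
    ∃ l₁ x l₂, l = l₁ ++ x :: l₂ ∧ p x ∧ ∀ y ∈ l₁, ¬ p y := by
  classical
  obtain ⟨x, hx, hpx⟩ := h
  obtain ⟨x, l₁, l₂, hl₁, hpx, rfl, -⟩ :=
    List.exists_of_eraseP (p := fun x => decide (p x)) hx (by simpa using hpx)
  exact ⟨l₁, x, l₂, rfl, by simpa using hpx, by simpa using hl₁⟩

theorem exists_last_append {p : V → Prop} (h : ∃ x ∈ l, p x) :
    ∃ l₁ x l₂, l = l₁ ++ x :: l₂ ∧ p x ∧ ∀ y ∈ l₂, ¬ p y := by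
  obtain ⟨l₁, x, l₂, hl, hx, hl₁⟩ := exists_first_append (l := l.reverse) (by simpa using h)
  refine ⟨l₂.reverse, x, l₁.reverse, ?_, hx, by simpa using hl₁⟩
  rw [← l.reverse_reverse, hl]
  simp

theorem isListWalk_support (p : G.Walk a b) : IsListWalk G a b p.support :=
  ⟨p.isChain_adj_support, by simp [List.head?_eq_some_head p.support_ne_nil],
    by simp [List.getLast?_eq_some_getLast p.support_ne_nil]⟩

namespace IsListWalk

theorem ne_nil (h : IsListWalk G a b l) : l ≠ [] := by
  rintro rfl
  simpa using h.head

theorem head_mem (h : IsListWalk G a b l) : a ∈ l := List.mem_of_mem_head? h.head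

theorem last_mem (h : IsListWalk G a b l) : b ∈ l := List.mem_of_mem_getLast? h.last

theorem singleton (G : SimpleGraph V) (a : V) : IsListWalk G a a [a] := ⟨by simp, rfl, rfl⟩

theorem exists_eq_cons (h : IsListWalk G a b l) : ∃ m, l = a :: m :=
  List.head?_eq_some_iff.mp h.head

theorem exists_eq_concat (h : IsListWalk G a b l) : ∃ m, l = m ++ [b] :=
  List.getLast?_eq_some_iff.mp h.last

theorem eq_of_cons (h : IsListWalk G a b (x :: l)) : x = a := by simpa using h.head

theorem eq_of_concat (h : IsListWalk G a b (l ++ [x])) : x = b := by simpa using h.last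

theorem exists_eq_cons_concat (h : IsListWalk G a b l) (hab : a ≠ b) :
    ∃ m, l = a :: (m ++ [b]) := by
  obtain ⟨l, rfl⟩ := h.exists_eq_cons
  rcases l.eq_nil_or_concat' with rfl | ⟨m, x, rfl⟩
  · exact absurd (h.eq_of_concat (l := [])) hab
  · exact ⟨m, by rw [h.eq_of_concat (l := a :: m)]⟩

theorem exists_walk (h : IsListWalk G a b l) : ∃ p : G.Walk a b, p.support = l := by
  have ha : l.head h.ne_nil = a := by
    simpa [List.head?_eq_some_head h.ne_nil] using h.head
  have hb : l.getLast h.ne_nil = b := by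
    simpa [List.getLast?_eq_some_getLast h.ne_nil] using h.last
  exact ⟨(Walk.ofSupport l h.ne_nil h.chain).copy ha hb, by simp⟩

theorem reverse (h : IsListWalk G a b l) : IsListWalk G b a l.reverse :=
  ⟨by simpa [List.isChain_reverse, G.adj_comm] using h.chain, by simpa using h.last,
    by simpa using h.head⟩

theorem mono (h : IsListWalk G a b l) (hGH : ∀ x ∈ l, ∀ y ∈ l, G.Adj x y → H.Adj x y) :
    IsListWalk H a b l :=
  ⟨h.chain.imp_of_mem_imp fun x y hx hy => hGH x hx y hy, h.head, h.last⟩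

theorem append (h : IsListWalk G a b l) (hbc : G.Adj b c) (h' : IsListWalk G c d m) :
    IsListWalk G a d (l ++ m) := by
  obtain ⟨l, rfl⟩ := h.exists_eq_concat
  obtain ⟨m, rfl⟩ := h'.exists_eq_cons
  refine ⟨?_, by simpa using h.head, by simpa using h'.last⟩
  rw [List.append_assoc, List.singleton_append, List.isChain_append_cons_cons]
  exact ⟨h.chain, hbc, h'.chain⟩

theorem cons (hab : G.Adj a b) (h : IsListWalk G b c l) : IsListWalk G a c (a :: l) :=
  (singleton G a).append hab h

theorem concat (h : IsListWalk G a b l) (hbc : G.Adj b c) : IsListWalk G a c (l ++ [c]) :=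
  h.append hbc (singleton G c)

theorem append_cons (h : IsListWalk G a x (l ++ [x])) (h' : IsListWalk G x b (x :: m)) :
    IsListWalk G a b (l ++ x :: m) :=
  ⟨List.isChain_split.mpr ⟨h.chain, h'.chain⟩, by cases l <;> simpa using h.head,
    by simpa using h'.last⟩

theorem of_append_cons (h : IsListWalk G a b (l ++ x :: m)) :
    IsListWalk G a x (l ++ [x]) ∧ IsListWalk G x b (x :: m) := by
  have hc := List.isChain_split.mp h.chain
  exact ⟨⟨hc.1, by cases l <;> simpa using h.head, by simp⟩, hc.2, rfl, by simpa using h.last⟩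

theorem of_append (h : IsListWalk G a d (l ++ m)) (hl : l ≠ []) (hm : m ≠ []) :
    ∃ b c, IsListWalk G a b l ∧ G.Adj b c ∧ IsListWalk G c d m := by
  obtain ⟨l, b, rfl⟩ := l.eq_nil_or_concat'.resolve_left hl
  obtain ⟨c, m, rfl⟩ := List.exists_cons_of_ne_nil hm
  obtain ⟨-, hcm⟩ := h.of_append_cons
  rw [List.append_assoc, List.singleton_append] at h
  exact ⟨b, c, h.of_append_cons.1, (List.isChain_append_cons_cons.mp h.chain).2.1, hcm⟩

theorem trans (h : IsListWalk G a b l) (h' : IsListWalk G b c m) :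
    ∃ k, IsListWalk G a c k ∧ ∀ x ∈ k, x ∈ l ∨ x ∈ m := by
  obtain ⟨l, rfl⟩ := h.exists_eq_concat
  obtain ⟨m, rfl⟩ := h'.exists_eq_cons
  exact ⟨l ++ b :: m, append_cons h h', by grind⟩

theorem exists_nodup (h : IsListWalk G a b l) : ∃ m, IsListWalk G a b m ∧ m.Nodup ∧ m ⊆ l := by
  classical
  obtain ⟨p, rfl⟩ := h.exists_walk
  exact ⟨p.bypass.support, isListWalk_support p.bypass, p.bypass_isPath.support_nodup,
    p.support_bypass_subset_support⟩

theorem exists_sublist_first {B : Set V} (h : IsListWalk G a b l) (hB : ∃ x ∈ l, x ∈ B) :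
    ∃ b' ∈ B, ∃ m, m.Sublist l ∧ IsListWalk G a b' m ∧ ∀ x ∈ m, x ∈ B → x = b' := by
  obtain ⟨l₁, b', l₂, rfl, hb', hl₁⟩ := exists_first_append hB
  refine ⟨b', hb', l₁ ++ [b'], ?_, h.of_append_cons.1, by grind⟩
  exact (List.Sublist.refl l₁).append (by simp)

theorem exists_sublist_last {A : Set V} (h : IsListWalk G a b l) (hA : ∃ x ∈ l, x ∈ A) :
    ∃ a' ∈ A, ∃ m, m.Sublist l ∧ IsListWalk G a' b m ∧ ∀ x ∈ m, x ∈ A → x = a' := by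
  obtain ⟨a', ha', m, hm, hw, hmA⟩ := h.reverse.exists_sublist_first (B := A) (by simpa using hA)
  exact ⟨a', ha', m.reverse, by simpa using hm.reverse, hw.reverse, by simpa using hmA⟩

end IsListWalk

end ListWalk

/-! ### Menger's theorem -/

section Menger

variable {G H : SimpleGraph V} {A B I J S T X Y : Finset V} {a b i j v x y : V} {l p q : List V}

/-- Every walk from `A` to `B` has a vertex in `S`. -/
def Separates (G : SimpleGraph V) (A B S : Finset V) : Prop :=
  ∀ ⦃a b p⦄, a ∈ A → b ∈ B → IsListWalk G a b p → ∃ x ∈ p, x ∈ S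

/-- The vertex `v` can be reached from `A` by a walk that avoids `S`. -/
def ReachableAvoiding (G : SimpleGraph V) (A S : Finset V) (v : V) : Prop :=
  ∃ a ∈ A, ∃ p, IsListWalk G a v p ∧ ∀ z ∈ p, z ∉ S

/-- An `A`–`B` path: a path from `a ∈ A` to `b ∈ B` that meets `A` only in its first vertex and
`B` only in its last one. -/
structure IsPathBetween (G : SimpleGraph V) (A B : Finset V) (a b : V) (l : List V) : Prop where
  walk : IsListWalk G a b l
  nodup : l.Nodup
  start_mem : a ∈ A
  end_mem : b ∈ B
  eq_start : ∀ x ∈ l, x ∈ A → x = a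
  eq_end : ∀ x ∈ l, x ∈ B → x = b

/-- A family of pairwise disjoint `A`–`B` paths, indexed by its set `J` of end vertices in `B`. -/
def IsLinkage (G : SimpleGraph V) (A B J : Finset V) (f : V → List V) : Prop :=
  (∀ j ∈ J, ∃ a, IsPathBetween G A B a j (f j)) ∧
    (J : Set V).Pairwise fun i j => (f i).Disjoint (f j)

theorem Separates.symm (h : Separates G A B S) : Separates G B A S := fun b a p hb ha hp => by
  simpa using h ha hb hp.reverse

theorem Separates.not_reachable (h : Separates G A B S) (hA : ReachableAvoiding G A S v)
    (hB : ReachableAvoiding G B S v) : False := by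
  obtain ⟨a, ha, p, hp, hpS⟩ := hA
  obtain ⟨b, hb, q, hq, hqS⟩ := hB
  obtain ⟨k, hk, hks⟩ := hp.trans hq.reverse
  obtain ⟨z, hz, hzS⟩ := h ha hb hk
  grind

theorem IsListWalk.exists_isPathBetween (h : IsListWalk G a b l) (ha : a ∈ A) (hb : b ∈ B) :
    ∃ a' b' m, IsPathBetween G A B a' b' m ∧ m ⊆ l := by
  obtain ⟨m, hm, hnd, hml⟩ := h.exists_nodup
  obtain ⟨b', hb', m₁, hm₁, hw₁, hB⟩ := hm.exists_sublist_first (B := B) ⟨b, hm.last_mem, hb⟩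
  obtain ⟨a', ha', m₂, hm₂, hw₂, hA⟩ := hw₁.exists_sublist_last (A := A) ⟨a, hw₁.head_mem, ha⟩
  exact ⟨a', b', m₂, ⟨hw₂, (hm₂.trans hm₁).nodup hnd, ha', hb', hA,
    fun x hx => hB x (hm₂.subset hx)⟩, fun x hx => hml ((hm₂.trans hm₁).subset hx)⟩

theorem IsPathBetween.reachableAvoiding (h : IsPathBetween G A X a i p) (hSX : S ⊆ X)
    (hv : v ∈ p) (hvS : v ∉ S) : ReachableAvoiding G A S v := by
  obtain ⟨l₁, l₂, rfl⟩ := List.append_of_mem hv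
  obtain ⟨hl₁, hl₂⟩ := h.walk.of_append_cons
  refine ⟨a, h.start_mem, l₁ ++ [v], hl₁, fun z hz hzS => ?_⟩
  have hzi : z = i := h.eq_end z (by grind) (hSX hzS)
  have hi := hl₂.last_mem
  have hnd := h.nodup
  grind

theorem Separates.common_vertex (hS : Separates G A B S) (hp : IsPathBetween G A X a i p)
    (hq : IsPathBetween G B Y b j q) (hSX : S ⊆ X) (hSY : S ⊆ Y) (hvp : v ∈ p) (hvq : v ∈ q) :
    v ∈ S ∧ v = i ∧ v = j := by
  have hvS : v ∈ S := by
    by_contra hvS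
    exact hS.not_reachable (hp.reachableAvoiding hSX hvp hvS) (hq.reachableAvoiding hSY hvq hvS)
  exact ⟨hvS, hp.eq_end v hvp (hSX hvS), hq.eq_end v hvq (hSY hvS)⟩

theorem exists_linkage_of_disjoint_walks {f : V → List V}
    (hf : ∀ i ∈ I, ∃ a ∈ A, ∃ b ∈ B, IsListWalk G a b (f i))
    (hdisj : (I : Set V).Pairwise fun i j => (f i).Disjoint (f j)) :
    ∃ J g, J.card = I.card ∧ IsLinkage G A B J g := by
  classical
  rcases isEmpty_or_nonempty V with hV | hV
  · exact ⟨I, f, rfl, fun j => hV.elim j, fun j => hV.elim j⟩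
  have hpath : ∀ i ∈ I, ∃ a b m, IsPathBetween G A B a b m ∧ m ⊆ f i := fun i hi => by
    obtain ⟨a, ha, b, hb, hw⟩ := hf i hi
    exact hw.exists_isPathBetween ha hb
  choose! s t m hm hmf using hpath
  have hmdisj : (I : Set V).Pairwise fun i j => (m i).Disjoint (m j) := fun i hi j hj hij =>
    List.disjoint_of_subset_left (hmf i hi) (List.disjoint_of_subset_right (hmf j hj)
      (hdisj hi hj hij))
  have hinj : Set.InjOn t I := fun i hi j hj hij => by
    by_contra hne
    exact hmdisj hi hj hne (hm i hi).walk.last_mem (hij ▸ (hm j hj).walk.last_mem)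
  have hinv : ∀ i ∈ I, Function.invFunOn t I (t i) = i := fun i hi =>
    hinj.leftInvOn_invFunOn hi
  refine ⟨I.image t, m ∘ Function.invFunOn t I, Finset.card_image_of_injOn hinj, ?_, ?_⟩
  · simp only [Finset.forall_mem_image, Function.comp_apply]
    intro i hi
    rw [hinv i hi]
    exact ⟨s i, hm i hi⟩
  · rw [Finset.coe_image, hinj.pairwise_image]
    intro i hi j hj hij
    simp only [Function.onFun, Function.comp_apply, hinv i hi, hinv j hj]
    exact hmdisj hi hj hij

theorem IsLinkage.eq_of_card_le {f : V → List V} (h : IsLinkage G A B J f)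
    (hJ : B.card ≤ J.card) : J = B :=
  Finset.eq_of_subset_of_card_le (fun j hj => (h.1 j hj).choose_spec.end_mem) hJ

theorem IsListWalk.of_missing_edge
    (hGH : ∀ u v, G.Adj u v → H.Adj u v ∨ s(u, v) = s(x, y))
    (h : IsListWalk G a b p) (hxy : ¬ (x ∈ p ∧ y ∈ p)) : IsListWalk H a b p :=
  h.mono fun u hu v hv huv => (hGH u v huv).resolve_right fun he => by
    rcases Sym2.eq_iff.mp he with ⟨rfl, rfl⟩ | ⟨rfl, rfl⟩
    exacts [hxy ⟨hu, hv⟩, hxy ⟨hv, hu⟩]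

theorem separates_of_separates_insert [DecidableEq V]
    (hGH : ∀ u v, G.Adj u v → H.Adj u v ∨ s(u, v) = s(x, y)) (hxy : x ≠ y)
    (hS : Separates H A B S) (hy : ReachableAvoiding H B S y)
    (hT : Separates H A (insert x S) T) : Separates G A B T := by
  intro a b p ha hb hp
  obtain ⟨p, hp, hnd, hpl⟩ := hp.exists_nodup
  have hmeet : ∃ w ∈ p, w ∈ (insert x S : Finset V) := by
    by_cases hx : x ∈ p
    · exact ⟨x, hx, Finset.mem_insert_self x S⟩
    · obtain ⟨w, hw, hwS⟩ := hS ha hb (hp.of_missing_edge hGH fun h => hx h.1)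
      exact ⟨w, hw, Finset.mem_insert_of_mem hwS⟩
  obtain ⟨w, hwX, m, hmp, hm, hmX⟩ := hp.exists_sublist_first (B := (insert x S : Finset V)) hmeet
  have hmH : IsListWalk H a w m := by
    refine hm.of_missing_edge hGH fun ⟨hxm, hym⟩ => ?_
    obtain rfl : x = w := hmX x hxm (by simp)
    obtain ⟨l₁, l₂, rfl⟩ := List.append_of_mem hym
    obtain ⟨hl₁, hl₂⟩ := hm.of_append_cons
    have hx₁ : x ∉ l₁ ++ [y] := by
      have := hl₂.last_mem
      have := hmp.nodup hnd
      grind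
    refine hS.not_reachable ⟨a, ha, l₁ ++ [y], hl₁.of_missing_edge hGH fun h => hx₁ h.1, ?_⟩ hy
    intro z hz hzS
    have := hmX z (by grind) (by simp [hzS])
    grind
  obtain ⟨t, ht, htT⟩ := hT ha hwX hmH
  exact ⟨t, hpl (hmp.subset ht), htT⟩

theorem exists_disjoint_walks_of_linkages [DecidableEq V] {f g : V → List V} (hHG : H ≤ G)
    (hadj : G.Adj x y)
    (hS : Separates H A B S) (hxS : x ∉ S) (hyS : y ∉ S)
    (hf : IsLinkage H A (insert x S) (insert x S) f)
    (hg : IsLinkage H B (insert y S) (insert y S) g) :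
    ∃ h : V → List V, (∀ i ∈ insert x S, ∃ a ∈ A, ∃ b ∈ B, IsListWalk G a b (h i)) ∧
      ((insert x S : Finset V) : Set V).Pairwise fun i j => (h i).Disjoint (h j) := by
  set σ := Equiv.swap x y
  have hσ : ∀ i ∈ S, σ i = i := fun i hi =>
    Equiv.swap_apply_of_ne_of_ne (by grind) (by grind)
  have hσmem : ∀ i ∈ insert x S, σ i ∈ insert y S := fun i hi => by
    rcases Finset.mem_insert.mp hi with rfl | hi
    · simp [σ]
    · simp [hσ i hi, hi]
  have hjoin : ∀ i ∈ insert x S, ∃ m, (∃ a ∈ A, ∃ b ∈ B, IsListWalk G a b m) ∧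
      ∀ v ∈ m, v ∈ f i ∨ v ∈ g (σ i) := fun i hi => by
    obtain ⟨a, hp⟩ := hf.1 i hi
    obtain ⟨b, hq⟩ := hg.1 (σ i) (hσmem i hi)
    have hpG : IsListWalk G a i (f i) := hp.walk.mono fun _ _ _ _ h => hHG h
    have hqG : IsListWalk G (σ i) b (g (σ i)).reverse :=
      hq.walk.reverse.mono fun _ _ _ _ h => hHG h
    rcases Finset.mem_insert.mp hi with rfl | hiS
    · have hσi : G.Adj i (σ i) := by simpa [σ] using hadj
      exact ⟨_, ⟨a, hp.start_mem, b, hq.start_mem, hpG.append hσi hqG⟩, by simp⟩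
    · rw [hσ i hiS] at hqG ⊢
      obtain ⟨m, hm, hms⟩ := hpG.trans hqG
      exact ⟨m, ⟨a, hp.start_mem, b, hq.start_mem, hm⟩, by simpa using hms⟩
  have hcross : ∀ i ∈ insert x S, ∀ j ∈ insert x S, ∀ v ∈ f i, v ∈ g (σ j) → i = j := by
    intro i hi j hj v hvi hvj
    obtain ⟨a, hp⟩ := hf.1 i hi
    obtain ⟨b, hq⟩ := hg.1 (σ j) (hσmem j hj)
    obtain ⟨hvS, rfl, hv⟩ := hS.common_vertex hp hq (Finset.subset_insert x S)
      (Finset.subset_insert y S) hvi hvj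
    exact σ.injective ((hσ v hvS).trans hv)
  choose! h hwalk hsub using hjoin
  refine ⟨h, hwalk, fun i hi j hj hij v hvi hvj => ?_⟩
  rcases hsub i hi v hvi with hi' | hi' <;> rcases hsub j hj v hvj with hj' | hj'
  · exact hf.2 hi hj hij hi' hj'
  · exact hij (hcross i hi j hj v hi' hj')
  · exact hij (hcross j hj i hi v hj' hi').symm
  · exact hg.2 (hσmem i hi) (hσmem j hj) (σ.injective.ne hij) hi' hj'

theorem Separates.reachable_of_missing_edge
    (hGH : ∀ u v, G.Adj u v → H.Adj u v ∨ s(u, v) = s(x, y)) (hxy : x ≠ y)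
    (hS : Separates H A B S) (hns : ¬ Separates G A B S) :
    ReachableAvoiding H A S x ∧ ReachableAvoiding H B S y ∨
      ReachableAvoiding H A S y ∧ ReachableAvoiding H B S x := by
  simp only [Separates, not_forall, not_exists, not_and] at hns
  obtain ⟨a, b, p, ha, hb, hp, hpS⟩ := hns
  have hmem : x ∈ p ∧ y ∈ p := by
    by_contra hxy
    obtain ⟨z, hz, hzS⟩ := hS ha hb (hp.of_missing_edge hGH hxy)
    exact hpS z hz hzS
  have hreach : ∀ {A : Finset V} {a b p}, a ∈ A → IsListWalk G a b p → (∀ z ∈ p, z ∉ S) →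
      x ∈ p → ∃ w ∈ ({x, y} : Set V), ReachableAvoiding H A S w := by
    intro A a b p ha hp hpS hx
    obtain ⟨w, hw, m, hmp, hm, hmw⟩ := hp.exists_sublist_first (B := {x, y}) ⟨x, hx, by simp⟩
    exact ⟨w, hw, a, ha, m, hm.of_missing_edge hGH fun h => hxy
      ((hmw x h.1 (by simp)).trans (hmw y h.2 (by simp)).symm), fun z hz => hpS z (hmp.subset hz)⟩
  obtain ⟨w, hw, hwA⟩ := hreach ha hp hpS hmem.1
  obtain ⟨w', hw', hwB⟩ := hreach hb hp.reverse (by simpa using hpS) (by simpa using hmem.1)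
  rcases hw with rfl | rfl <;> rcases hw' with rfl | rfl
  · exact (hS.not_reachable hwA hwB).elim
  · exact Or.inl ⟨hwA, hwB⟩
  · exact Or.inr ⟨hwA, hwB⟩
  · exact (hS.not_reachable hwA hwB).elim

theorem exists_linkage_of_missing_edge {k : ℕ}
    (hGH : ∀ u v, G.Adj u v → H.Adj u v ∨ s(u, v) = s(x, y)) (hHG : H ≤ G) (hadj : G.Adj x y)
    (hS : Separates H A B S) (hx : ReachableAvoiding H A S x) (hy : ReachableAvoiding H B S y)
    (hSk : S.card < k) (hk : ∀ T, Separates G A B T → k ≤ T.card)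
    (ih : ∀ A B : Finset V, (∀ T, Separates H A B T → k ≤ T.card) →
      ∃ J f, J.card = k ∧ IsLinkage H A B J f) :
    ∃ J f, J.card = k ∧ IsLinkage G A B J f := by
  classical
  have hxS : x ∉ S := by
    obtain ⟨a, -, p, hp, hpS⟩ := hx
    exact hpS x hp.last_mem
  have hyS : y ∉ S := by
    obtain ⟨a, -, p, hp, hpS⟩ := hy
    exact hpS y hp.last_mem
  obtain ⟨J, f, hJ, hf⟩ := ih A (insert x S) fun T hT =>
    hk T (separates_of_separates_insert hGH hadj.ne hS hy hT)
  obtain ⟨J', g, hJ', hg⟩ := ih B (insert y S) fun T hT =>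
    hk T (separates_of_separates_insert (fun u v h => Sym2.eq_swap (a := x) ▸ hGH u v h)
      hadj.ne' hS.symm hx hT).symm
  have hxcard := Finset.card_insert_of_notMem hxS
  have hycard := Finset.card_insert_of_notMem hyS
  obtain rfl := hf.eq_of_card_le (by lia)
  obtain rfl := hg.eq_of_card_le (by lia)
  obtain ⟨h, hwalk, hdisj⟩ := exists_disjoint_walks_of_linkages hHG hadj hS hxS hyS hf hg
  obtain ⟨K, h', hK, hh'⟩ := exists_linkage_of_disjoint_walks hwalk hdisj
  exact ⟨K, h', hK.trans hJ, hh'⟩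

theorem exists_linkage_of_edgeless {k : ℕ} (hG : ∀ x y, ¬ G.Adj x y)
    (hk : ∀ T, Separates G A B T → k ≤ T.card) : ∃ J f, J.card = k ∧ IsLinkage G A B J f := by
  classical
  have hsep : Separates G A B (A ∩ B) := by
    intro a b p ha hb hp
    obtain ⟨l, rfl⟩ := hp.exists_eq_cons
    rcases l with _ | ⟨c, l⟩
    · obtain rfl : a = b := hp.eq_of_concat (l := [])
      exact ⟨a, by simp, by simp [ha, hb]⟩
    · exact (hG a c (List.isChain_cons_cons.mp hp.chain).1).elim
  obtain ⟨J, hJ, hJk⟩ := Finset.exists_subset_card_eq (hk _ hsep)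
  refine ⟨J, fun j => [j], hJk, fun j hj => ⟨j, ?_⟩, fun i _ j _ hij => by simpa using hij.symm⟩
  obtain ⟨hjA, hjB⟩ := Finset.mem_inter.mp (hJ hj)
  exact ⟨.singleton G j, List.nodup_singleton j, hjA, hjB, by simp, by simp⟩

-- Göring's proof: delete an edge, and paste linkages to and from a separator that has become
-- too small.
theorem menger (hfin : G.edgeSet.Finite) {k : ℕ} (hk : ∀ T, Separates G A B T → k ≤ T.card) :
    ∃ J f, J.card = k ∧ IsLinkage G A B J f := by
  classical
  induction hn : G.edgeSet.ncard using Nat.strong_induction_on generalizing G A B with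
  | _ n ih =>
  by_cases hedge : ∃ x y, G.Adj x y
  swap
  · push Not at hedge
    exact exists_linkage_of_edgeless hedge hk
  obtain ⟨x, y, hxy⟩ := hedge
  set H := G.deleteEdges {s(x, y)} with hH
  have hHG : H ≤ G := G.deleteEdges_le _
  have hGH : ∀ u v, G.Adj u v → H.Adj u v ∨ s(u, v) = s(x, y) := fun u v huv => by
    rw [hH, deleteEdges_adj, Set.mem_singleton_iff]
    tauto
  have hlt : H.edgeSet.ncard < n := by
    rw [← hn, hH, edgeSet_deleteEdges]
    exact Set.ncard_sdiff_singleton_lt_of_mem hxy hfin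
  have ihH : ∀ A B : Finset V, (∀ T, Separates H A B T → k ≤ T.card) →
      ∃ J f, J.card = k ∧ IsLinkage H A B J f := fun A B hk =>
    ih _ hlt (hfin.subset (edgeSet_mono hHG)) hk rfl
  by_cases hS : ∀ T, Separates H A B T → k ≤ T.card
  · obtain ⟨J, f, hJ, hf, hdisj⟩ := ihH A B hS
    refine ⟨J, f, hJ, fun j hj => ?_, hdisj⟩
    obtain ⟨a, ha⟩ := hf j hj
    exact ⟨a, { ha with walk := ha.walk.mono fun _ _ _ _ h => hHG h }⟩
  push Not at hS
  obtain ⟨S, hS, hSk⟩ := hS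
  have hns : ¬ Separates G A B S := fun h => (hk S h).not_gt hSk
  rcases hS.reachable_of_missing_edge hGH hxy.ne hns with ⟨hx, hy⟩ | ⟨hy, hx⟩
  · exact exists_linkage_of_missing_edge hGH hHG hxy hS hx hy hSk hk ihH
  · exact exists_linkage_of_missing_edge (fun u v h => Sym2.eq_swap (a := x) ▸ hGH u v h) hHG
      hxy.symm hS hy hx hSk hk ihH

theorem exists_full_linkage (hfin : G.edgeSet.Finite)
    (hB : ∀ T, Separates G A B T → B.card ≤ T.card) : ∃ f, IsLinkage G A B B f := by
  obtain ⟨J, f, hJ, hf⟩ := menger hfin hB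
  obtain rfl := hf.eq_of_card_le hJ.ge
  exact ⟨f, hf⟩

end Menger

/-! ### Cycles and long paths inside a set -/

section Paths

variable {G : SimpleGraph V} {S T : Finset V} {a b x : V} {l m : List V} {n k : ℕ}

/-- There is a path from `a` to `b` with at least `n` vertices, all of them in `S`. -/
def HasPathIn (G : SimpleGraph V) (S : Finset V) (n : ℕ) (a b : V) : Prop :=
  ∃ l, IsListWalk G a b l ∧ l.Nodup ∧ (∀ x ∈ l, x ∈ S) ∧ n ≤ l.length

theorem HasPathIn.symm (h : HasPathIn G S n a b) : HasPathIn G S n b a := by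
  obtain ⟨l, hl, hnd, hS, hn⟩ := h
  exact ⟨l.reverse, hl.reverse, by simpa using hnd, by simpa using hS, by simpa using hn⟩

theorem HasPathIn.mono (h : HasPathIn G S n a b) (hST : S ⊆ T) (hkn : k ≤ n) :
    HasPathIn G T k a b := by
  obtain ⟨l, hl, hnd, hS, hn⟩ := h
  exact ⟨l, hl, hnd, fun x hx => hST (hS x hx), hkn.trans hn⟩

theorem IsListWalk.hasPathIn_of_subperm [DecidableEq V] (h : IsListWalk G a b l) (hm : m.Nodup)
    (hlm : l.Subperm m) : HasPathIn G m.toFinset l.length a b := by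
  refine ⟨l, h, ?_, fun x hx => List.mem_toFinset.mpr (hlm.subset hx), le_rfl⟩
  obtain ⟨k, hkl, hkm⟩ := hlm
  exact hkl.nodup_iff.mp (hkm.nodup hm)

open Classical in
/-- The number of neighbours of `x` in `S`. -/
noncomputable def degIn (G : SimpleGraph V) (S : Finset V) (x : V) : ℕ :=
  {y ∈ S | G.Adj x y}.card

theorem degIn_lt_card (hx : x ∈ S) : degIn G S x < S.card := by
  classical
  exact Finset.card_lt_card (Finset.filter_ssubset.mpr ⟨x, hx, G.irrefl⟩)

open Classical in
theorem degIn_toFinset [DecidableEq V] (hl : l.Nodup) (x : V) :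
    degIn G l.toFinset x = l.countP fun v => G.Adj x v := by
  rw [degIn, List.countP_eq_length_filter, ← List.toFinset_card_of_nodup (hl.filter _)]
  congr 1
  ext v
  simp

end Paths

section ListCycle

/-- A cycle of `G`, encoded as the list of its vertices in cyclic order. -/
structure IsListCycle (G : SimpleGraph V) (l : List V) : Prop where
  three_le : 3 ≤ l.length
  nodup : l.Nodup
  closed : ∃ a b, IsListWalk G a b l ∧ G.Adj b a

variable {G : SimpleGraph V} {y z : V} {A B Q l m : List V}

theorem toFinset_reverse_arcs [DecidableEq V] (A B : List V) (y z : V) :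
    (y :: (B.reverse ++ z :: A.reverse)).toFinset = (y :: (A ++ z :: B)).toFinset := by
  ext x
  simp only [List.mem_toFinset, List.mem_cons, List.mem_append, List.mem_reverse]
  tauto

theorem toFinset_swap_arcs [DecidableEq V] (A B : List V) (y z : V) :
    (z :: (B ++ y :: A)).toFinset = (y :: (A ++ z :: B)).toFinset :=
  List.toFinset_eq_of_perm _ _ (List.perm_append_comm (l₁ := z :: B) (l₂ := y :: A))

namespace IsListCycle

theorem rotate (h : IsListCycle G (l ++ m)) : IsListCycle G (m ++ l) := by
  obtain ⟨hlen, hnd, a, b, hw, hba⟩ := h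
  refine ⟨by simpa [add_comm] using hlen, List.nodup_append_comm.mp hnd, ?_⟩
  rcases eq_or_ne l [] with rfl | hl
  · exact ⟨a, b, by simpa using hw, hba⟩
  rcases eq_or_ne m [] with rfl | hm
  · exact ⟨a, b, by simpa using hw, hba⟩
  obtain ⟨c, d, hl, hcd, hm⟩ := hw.of_append hl hm
  exact ⟨d, c, hm.append hba hl, hcd⟩

theorem reverse (h : IsListCycle G l) : IsListCycle G l.reverse := by
  obtain ⟨hlen, hnd, a, b, hw, hba⟩ := h
  exact ⟨by simpa using hlen, by simpa using hnd, b, a, hw.reverse, hba.symm⟩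

theorem exists_perm_cons (h : IsListCycle G Q) (hy : y ∈ Q) :
    ∃ A, IsListCycle G (y :: A) ∧ (y :: A).Perm Q := by
  obtain ⟨l₁, l₂, rfl⟩ := List.append_of_mem hy
  exact ⟨l₂ ++ l₁, h.rotate, List.perm_append_comm (l₁ := y :: l₂) (l₂ := l₁)⟩

theorem exists_perm_arcs (h : IsListCycle G Q) (hy : y ∈ Q) (hz : z ∈ Q) (hyz : y ≠ z) :
    ∃ A B, IsListCycle G (y :: (A ++ z :: B)) ∧ (y :: (A ++ z :: B)).Perm Q := by
  obtain ⟨l, hl, hlQ⟩ := h.exists_perm_cons hy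
  have hzl : z ∈ l := (List.mem_cons.mp (hlQ.symm.subset hz)).resolve_left hyz.symm
  obtain ⟨A, B, rfl⟩ := List.append_of_mem hzl
  exact ⟨A, B, hl, hlQ⟩

theorem swap_arcs (h : IsListCycle G (y :: (A ++ z :: B))) : IsListCycle G (z :: (B ++ y :: A)) :=
  rotate (l := y :: A) (m := z :: B) h

theorem reverse_arcs (h : IsListCycle G (y :: (A ++ z :: B))) :
    IsListCycle G (y :: (B.reverse ++ z :: A.reverse)) :=
  rotate (l := B.reverse ++ z :: A.reverse) (m := [y]) (by simpa using h.reverse)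

theorem closed_walk (h : IsListCycle G (y :: A)) : IsListWalk G y y (y :: (A ++ [y])) := by
  obtain ⟨-, -, a, b, hw, hba⟩ := h
  obtain rfl := hw.eq_of_cons
  exact hw.concat hba

theorem walk_arc (h : IsListCycle G (y :: (A ++ z :: B))) : IsListWalk G y z (y :: (A ++ [z])) :=
  (IsListWalk.of_append_cons (l := y :: A) (m := B ++ [y]) (by simpa using h.closed_walk)).1

theorem hasPathIn_arc [DecidableEq V] (h : IsListCycle G (y :: (A ++ z :: B))) :
    HasPathIn G (y :: (A ++ z :: B)).toFinset (A.length + 2) y z := by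
  have hsub : (y :: (A ++ [z])).Sublist (y :: (A ++ z :: B)) := by simp
  simpa using h.walk_arc.hasPathIn_of_subperm h.nodup hsub.subperm

theorem hasPathIn_arc' [DecidableEq V] (h : IsListCycle G (y :: (A ++ z :: B))) :
    HasPathIn G (y :: (A ++ z :: B)).toFinset (B.length + 2) y z := by
  have harc := h.reverse_arcs.hasPathIn_arc
  rwa [toFinset_reverse_arcs, List.length_reverse] at harc

theorem hasPathIn_of_two_mul_le [DecidableEq V] (h : IsListCycle G Q)
    {t : ℕ} (ht : 2 * t ≤ Q.length) (hy : y ∈ Q) (hz : z ∈ Q) (hyz : y ≠ z) :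
    HasPathIn G Q.toFinset (t + 1) y z := by
  obtain ⟨A, B, hAB, hperm⟩ := h.exists_perm_arcs hy hz hyz
  have hlen := hperm.length_eq
  simp only [List.length_cons, List.length_append] at hlen
  rw [← List.toFinset_eq_of_perm _ _ hperm]
  rcases le_total B.length A.length with hBA | hAB'
  · exact hAB.hasPathIn_arc.mono subset_rfl (by lia)
  · exact hAB.hasPathIn_arc'.mono subset_rfl (by lia)

end IsListCycle

end ListCycle

section Crossing

variable {G : SimpleGraph V} {a p r y z : V} {A A₁ A₂ B B₁ B₂ Q l m : List V} {t : ℕ}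

theorem exists_consecutive_of_length_lt_countP_add (R S : V → Bool) {l : List V}
    (h : l.length + 1 < l.countP R + l.countP S) :
    ∃ l₁ a b l₂, l = l₁ ++ a :: b :: l₂ ∧ R a ∧ S b := by
  have hstrong : ∀ l : List V, l.length + (if l.head?.any S then 1 else 0) <
      l.countP R + l.countP S → ∃ l₁ a b l₂, l = l₁ ++ a :: b :: l₂ ∧ R a ∧ S b := by
    intro l
    induction l with
    | nil => simp
    | cons a l ih =>
      intro h
      by_cases hl : l.length + (if l.head?.any S then 1 else 0) < l.countP R + l.countP S
      · obtain ⟨l₁, b, c, l₂, rfl, hb, hc⟩ := ih hl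
        exact ⟨a :: l₁, b, c, l₂, rfl, hb, hc⟩
      · rcases l with _ | ⟨b, l⟩
        · grind
        · exact ⟨[], a, b, l, rfl, by grind, by grind⟩
  refine hstrong l (lt_of_le_of_lt ?_ h)
  split_ifs <;> lia

open Classical in
theorem exists_walk_perm_of_length_lt_countP_add (hl : IsListWalk G y r (l ++ [r]))
    (hm : IsListWalk G p z m)
    (h : l.length + 1 < l.countP (fun v => G.Adj r v) + l.countP fun v => G.Adj p v) :
    ∃ k, IsListWalk G y z k ∧ k.Perm (l ++ r :: m) := by
  obtain ⟨l₁, a, b, l₂, rfl, ha, hb⟩ := exists_consecutive_of_length_lt_countP_add _ _ h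
  have hya : IsListWalk G y a (l₁ ++ [a]) :=
    (IsListWalk.of_append_cons (m := b :: (l₂ ++ [r])) (by simpa using hl)).1
  have hbr : IsListWalk G b r (b :: (l₂ ++ [r])) :=
    (IsListWalk.of_append_cons (l := l₁ ++ [a]) (by simpa using hl)).2
  rw [decide_eq_true_eq] at ha hb
  refine ⟨_, (hya.append ha.symm hbr.reverse).append hb.symm hm, ?_⟩
  rw [List.perm_iff_count]
  intro v
  simp only [List.reverse_cons, List.reverse_append, List.reverse_nil, List.nil_append,
    List.count_append, List.count_cons, List.count_nil, List.count_reverse]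
  lia

theorem exists_first_last_append (R : V → Bool) (h : ∃ x ∈ A, R x) :
    ∃ A₁ p A₂ A₃ q A₄, A = A₁ ++ p :: A₂ ∧ A = A₃ ++ q :: A₄ ∧ R p ∧ R q ∧
      A₁.length + A₄.length + A.countP R ≤ A.length := by
  obtain ⟨A₁, p, A₂, rfl, hp, hA₁⟩ := exists_first_append (p := fun x => R x) h
  obtain ⟨X, q, A₄, hX, hq, hA₄⟩ :=
    exists_last_append (p := fun x => R x) (l := p :: A₂) ⟨p, by simp, hp⟩
  refine ⟨A₁, p, A₂, A₁ ++ X, q, A₄, rfl, by rw [hX, List.append_assoc], hp, hq, ?_⟩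
  have hX' := X.countP_le_length (p := R)
  have hcount₁ : A₁.countP R = 0 := List.countP_eq_zero.mpr hA₁
  have hcount₄ : A₄.countP R = 0 := List.countP_eq_zero.mpr hA₄
  rw [hX]
  simp only [List.countP_append, List.countP_cons, hq, if_true, List.length_append,
    List.length_cons, hcount₁, hcount₄]
  lia

variable [DecidableEq V]

theorem IsListCycle.hasPathIn_of_adj_arcs
    (h : IsListCycle G (y :: ((A₁ ++ p :: A₂) ++ z :: (B₁ ++ r :: B₂))))
    (ha : a ∈ A₁ ++ [p]) (hra : G.Adj r a) :
    HasPathIn G (y :: ((A₁ ++ p :: A₂) ++ z :: (B₁ ++ r :: B₂))).toFinset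
      (A₂.length + B₂.length + 4) y z := by
  obtain ⟨X, Y, hXY⟩ := List.append_of_mem ha
  have hA : A₁ ++ p :: A₂ = X ++ a :: (Y ++ A₂) := by
    simpa using congrArg (· ++ A₂) hXY
  rw [hA] at h ⊢
  have hyr : IsListWalk G y r (y :: (B₂.reverse ++ [r])) :=
    (IsListWalk.of_append_cons (l := y :: B₂.reverse) (m := B₁.reverse ++ [z])
      (by simpa using h.reverse_arcs.walk_arc)).1
  have haz : IsListWalk G a z (a :: (Y ++ A₂ ++ [z])) :=
    (IsListWalk.of_append_cons (l := y :: X) (by simpa using h.walk_arc)).2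
  refine ((hyr.append hra haz).hasPathIn_of_subperm h.nodup ?_).mono subset_rfl ?_
  · rw [List.subperm_iff_count]
    intro v
    simp only [List.count_append, List.count_cons, List.count_nil, List.count_reverse]
    lia
  · simp only [List.length_append, List.length_cons, List.length_nil, List.length_reverse]
    lia

open Classical in
theorem length_lt_countP_add_of_degIn_add
    (hnd : (y :: ((A₁ ++ p :: A₂) ++ z :: (B₁ ++ r :: B₂))).Nodup)
    (hr : ∀ a ∈ A₁ ++ [p], ¬ G.Adj r a) (hp : ∀ b ∈ B₁ ++ [r], ¬ G.Adj p b)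
    (hdeg : (A₁ ++ p :: A₂).length + (B₁ ++ r :: B₂).length + 3 ≤
      degIn G (y :: ((A₁ ++ p :: A₂) ++ z :: (B₁ ++ r :: B₂))).toFinset p +
      degIn G (y :: ((A₁ ++ p :: A₂) ++ z :: (B₁ ++ r :: B₂))).toFinset r) :
    (z :: A₂.reverse).length + (y :: B₂.reverse).length + 2 <
      (z :: A₂.reverse).countP (fun v => G.Adj p v) +
        (z :: A₂.reverse).countP (fun v => G.Adj r v) +
        ((y :: B₂.reverse).countP (fun v => G.Adj r v) +
          (y :: B₂.reverse).countP fun v => G.Adj p v) := by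
  have hA₁ : A₁.countP (fun v => G.Adj r v) = 0 := by
    simpa [List.countP_eq_zero] using fun a ha => hr a (by simp [ha])
  have hB₁ : B₁.countP (fun v => G.Adj p v) = 0 := by
    simpa [List.countP_eq_zero] using fun b hb => hp b (by simp [hb])
  have hA₁' := A₁.countP_le_length (p := fun v => G.Adj p v)
  have hB₁' := B₁.countP_le_length (p := fun v => G.Adj r v)
  have hrp : ¬ G.Adj r p := hr p (by simp)
  have hpr : ¬ G.Adj p r := fun h => hrp h.symm
  simp only [degIn_toFinset hnd, List.countP_cons, List.countP_append, List.length_append,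
    List.length_cons, List.countP_reverse, List.length_reverse, hrp, hpr, G.irrefl,
    decide_false] at hdeg ⊢
  lia

-- Two consecutive vertices of one of the remaining arcs are adjacent to `r` and to `p`, and the
-- path can be rerouted between them.
theorem IsListCycle.hasPathIn_of_degIn_add_of_not_adj
    (h : IsListCycle G (y :: ((A₁ ++ p :: A₂) ++ z :: (B₁ ++ r :: B₂))))
    (hr : ∀ a ∈ A₁ ++ [p], ¬ G.Adj r a) (hp : ∀ b ∈ B₁ ++ [r], ¬ G.Adj p b)
    (hdeg : (A₁ ++ p :: A₂).length + (B₁ ++ r :: B₂).length + 3 ≤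
      degIn G (y :: ((A₁ ++ p :: A₂) ++ z :: (B₁ ++ r :: B₂))).toFinset p +
      degIn G (y :: ((A₁ ++ p :: A₂) ++ z :: (B₁ ++ r :: B₂))).toFinset r) :
    HasPathIn G (y :: ((A₁ ++ p :: A₂) ++ z :: (B₁ ++ r :: B₂))).toFinset
      (A₂.length + B₂.length + 4) y z := by
  classical
  have hyr : IsListWalk G y r (y :: B₂.reverse ++ [r]) :=
    (IsListWalk.of_append_cons (l := y :: B₂.reverse) (m := B₁.reverse ++ [z])
      (by simpa using h.reverse_arcs.walk_arc)).1
  have hzp : IsListWalk G z p (z :: A₂.reverse ++ [p]) := by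
    simpa using (IsListWalk.of_append_cons (l := y :: A₁) (m := A₂ ++ [z])
      (by simpa using h.walk_arc)).2.reverse
  obtain ⟨k, hk, hperm⟩ :
      ∃ k, IsListWalk G y z k ∧ k.Perm (y :: B₂.reverse ++ r :: p :: A₂ ++ [z]) := by
    have hcount := length_lt_countP_add_of_degIn_add h.nodup hr hp hdeg
    by_cases hyB : (y :: B₂.reverse).length + 1 < (y :: B₂.reverse).countP (fun v => G.Adj r v) +
        (y :: B₂.reverse).countP fun v => G.Adj p v
    · simpa using exists_walk_perm_of_length_lt_countP_add hyr hzp.reverse hyB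
    · obtain ⟨k, hk, hperm⟩ := exists_walk_perm_of_length_lt_countP_add hzp hyr.reverse (by lia)
      refine ⟨k.reverse, hk.reverse, (List.reverse_perm k).trans (hperm.trans ?_)⟩
      rw [List.perm_iff_count]
      intro v
      simp only [List.reverse_cons, List.reverse_append, List.reverse_nil, List.nil_append,
        List.count_append, List.count_cons, List.count_nil, List.count_reverse,
        List.reverse_reverse]
      lia
  refine (hk.hasPathIn_of_subperm h.nodup ?_).mono subset_rfl ?_
  · rw [List.subperm_iff_count]
    intro v
    rw [hperm.count_eq]
    simp only [List.count_append, List.count_cons, List.count_nil, List.count_reverse]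
    lia
  · simp only [hperm.length_eq, List.length_append, List.length_cons, List.length_nil,
      List.length_reverse]
    lia

theorem IsListCycle.hasPathIn_of_degIn_add
    (h : IsListCycle G (y :: ((A₁ ++ p :: A₂) ++ z :: (B₁ ++ r :: B₂))))
    (hdeg : (A₁ ++ p :: A₂).length + (B₁ ++ r :: B₂).length + 3 ≤
      degIn G (y :: ((A₁ ++ p :: A₂) ++ z :: (B₁ ++ r :: B₂))).toFinset p +
      degIn G (y :: ((A₁ ++ p :: A₂) ++ z :: (B₁ ++ r :: B₂))).toFinset r) :
    HasPathIn G (y :: ((A₁ ++ p :: A₂) ++ z :: (B₁ ++ r :: B₂))).toFinset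
      (A₂.length + B₂.length + 4) y z := by
  by_cases hr : ∃ a ∈ A₁ ++ [p], G.Adj r a
  · obtain ⟨a, ha, hra⟩ := hr
    exact h.hasPathIn_of_adj_arcs ha hra
  by_cases hp : ∃ b ∈ B₁ ++ [r], G.Adj p b
  · obtain ⟨b, hb, hpb⟩ := hp
    exact (h.swap_arcs.hasPathIn_of_adj_arcs hb hpb).symm.mono (toFinset_swap_arcs _ _ _ _).le
      (by lia)
  push Not at hr hp
  exact h.hasPathIn_of_degIn_add_of_not_adj hr hp hdeg

theorem IsListCycle.hasPathIn_of_countP_arc (h : IsListCycle G (y :: (A ++ z :: B)))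
    (ht : 2 ≤ t) (R : V → Bool) (hR : ∀ v, R v → t ≤ degIn G (y :: (A ++ z :: B)).toFinset v)
    (hcount : t ≤ (y :: (A ++ z :: B)).countP R) (hA : ∀ x ∈ A, ¬ R x) :
    HasPathIn G (y :: (A ++ z :: B)).toFinset (t + 1) y z := by
  classical
  have hA0 : A.countP R = 0 := List.countP_eq_zero.mpr hA
  have hlen := h.three_le
  have hBR := B.countP_le_length (p := R)
  simp only [List.countP_cons, List.countP_append, hA0, List.length_cons, List.length_append]
    at hcount hlen
  by_cases hB : t ≤ B.length + 1
  · exact h.hasPathIn_arc'.mono subset_rfl (by lia)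
  rcases B with _ | ⟨r, B⟩
  · exact h.hasPathIn_arc.mono subset_rfl (by grind)
  have hr : R r := by
    by_contra hr
    grind
  by_cases ha : ∃ a ∈ A, G.Adj r a
  · obtain ⟨a, ha, hra⟩ := ha
    obtain ⟨X, X', rfl⟩ := List.append_of_mem ha
    exact (h.hasPathIn_of_adj_arcs (B₁ := []) (a := a) (by simp) hra).mono subset_rfl (by grind)
  · push Not at ha
    have hdeg := hR r hr
    have hrA : A.countP (fun v => G.Adj r v) = 0 := by
      simpa [List.countP_eq_zero] using ha
    have hrB := B.countP_le_length (p := fun v => G.Adj r v)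
    simp only [degIn_toFinset h.nodup, List.countP_cons, List.countP_append, hrA, G.irrefl,
      decide_false] at hdeg
    grind

theorem IsListCycle.hasPathIn_of_countP_both_arcs (h : IsListCycle G (y :: (A ++ z :: B)))
    (R : V → Bool) (hR : ∀ v, R v → t ≤ degIn G (y :: (A ++ z :: B)).toFinset v)
    (hcount : t ≤ (y :: (A ++ z :: B)).countP R) (hlen : A.length + B.length + 2 < 2 * t)
    (hA : ∃ x ∈ A, R x) (hB : ∃ x ∈ B, R x) :
    HasPathIn G (y :: (A ++ z :: B)).toFinset (t + 1) y z := by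
  have hnt : t < A.length + B.length + 2 := by
    obtain ⟨x, hx, hxR⟩ := hA
    have hdeg := degIn_lt_card (G := G) (S := (y :: (A ++ z :: B)).toFinset) (x := x)
      (by simp [hx])
    have hcard := (y :: (A ++ z :: B)).toFinset_card_le
    have := hR x hxR
    grind
  obtain ⟨A₁, p, A₂, A₃, p', A₄, hA₁, hA₄, hp, hp', hAR⟩ := exists_first_last_append R hA
  obtain ⟨B₁, r, B₂, B₃, r', B₄, hB₁, hB₄, hr, hr', hBR⟩ := exists_first_last_append R hB
  have hfirst : HasPathIn G (y :: (A ++ z :: B)).toFinset (A₂.length + B₂.length + 4) y z := by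
    have hdeg := add_le_add (hR p hp) (hR r hr)
    rw [hA₁, hB₁] at h hdeg hlen ⊢
    exact h.hasPathIn_of_degIn_add (by lia)
  have hlast : HasPathIn G (y :: (A ++ z :: B)).toFinset (A₃.length + B₃.length + 4) y z := by
    have hdeg := add_le_add (hR r' hr') (hR p' hp')
    have hrev := h.reverse_arcs
    rw [← List.length_reverse (as := A), ← List.length_reverse (as := B)] at hlen
    rw [← toFinset_reverse_arcs A B] at hdeg ⊢
    have hAr : A.reverse = A₄.reverse ++ p' :: A₃.reverse := by simp [hA₄]
    have hBr : B.reverse = B₄.reverse ++ r' :: B₃.reverse := by simp [hB₄]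
    rw [hAr, hBr] at hrev hdeg hlen ⊢
    exact (hrev.hasPathIn_of_degIn_add (by lia)).mono subset_rfl (by simp [add_comm])
  simp only [List.countP_cons, List.countP_append] at hcount
  have hA₁' := congrArg List.length hA₁
  have hA₄' := congrArg List.length hA₄
  have hB₁' := congrArg List.length hB₁
  have hB₄' := congrArg List.length hB₄
  simp only [List.length_append, List.length_cons] at hA₁' hA₄' hB₁' hB₄'
  by_cases hshort : t + 1 ≤ A₂.length + B₂.length + 4
  · exact hfirst.mono subset_rfl hshort
  · exact hlast.mono subset_rfl (by grind)

theorem IsListCycle.hasPathIn_of_le_countP_degIn (h : IsListCycle G Q) (ht : 2 ≤ t)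
    (hcard : t ≤ Q.countP fun v => t ≤ degIn G Q.toFinset v) (hy : y ∈ Q) (hz : z ∈ Q)
    (hyz : y ≠ z) : HasPathIn G Q.toFinset (t + 1) y z := by
  rcases le_or_gt (2 * t) Q.length with hlen | hlen
  · exact h.hasPathIn_of_two_mul_le hlen hy hz hyz
  obtain ⟨A, B, hAB, hperm⟩ := h.exists_perm_arcs hy hz hyz
  rw [← List.toFinset_eq_of_perm _ _ hperm] at hcard ⊢
  set R : V → Bool := fun v => t ≤ degIn G (y :: (A ++ z :: B)).toFinset v
  have hR : ∀ v, R v → t ≤ degIn G (y :: (A ++ z :: B)).toFinset v := fun v hv => by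
    simpa [R] using hv
  have hcount : t ≤ (y :: (A ++ z :: B)).countP R := by rwa [hperm.countP_eq]
  by_cases hA : ∃ x ∈ A, R x
  swap
  · push Not at hA
    exact hAB.hasPathIn_of_countP_arc ht R hR hcount (by simpa using hA)
  by_cases hB : ∃ x ∈ B, R x
  swap
  · push Not at hB
    have hpath := hAB.swap_arcs.hasPathIn_of_countP_arc ht R
      (by rwa [toFinset_swap_arcs]) (hcount.trans_eq
        ((List.perm_append_comm (l₁ := y :: A) (l₂ := z :: B)).countP_eq R)) (by simpa using hB)
    rw [toFinset_swap_arcs] at hpath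
    exact hpath.symm
  have hQ := hperm.length_eq
  simp only [List.length_cons, List.length_append] at hQ
  exact hAB.hasPathIn_of_countP_both_arcs R hR hcount (by lia) hA hB

end Crossing

/-! ### Ears of a longest cycle -/

section CyclicSum

variable {α β : Type*} {Y : Finset α} {n c d : ℕ} {pos : α → ℕ}

theorem sum_add_le_of_forall_castSucc {m : ℕ} (e : Fin (m + 1) → ℕ) (g : Fin m → ℕ)
    (h : ∀ k, g k + e k.castSucc ≤ e k.succ) : ∑ k, g k + e 0 ≤ e (Fin.last m) := by
  induction m with
  | zero => simp
  | succ m ih =>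
    have hinit := ih (fun k => e k.castSucc) (fun k => g k.castSucc) fun k => h k.castSucc
    have hlast := h (Fin.last m)
    rw [Fin.castSucc_zero] at hinit
    rw [Fin.succ_last] at hlast
    rw [Fin.sum_univ_castSucc]
    lia

theorem exists_cyclic_enumeration (hY : Y.card = n + 2) (hpos : Set.InjOn pos Y)
    (gap : α → α → ℕ) (hgap : ∀ y ∈ Y, ∀ y' ∈ Y, pos y < pos y' →
      gap y y' + pos y ≤ pos y' ∧ gap y' y + pos y' ≤ c + pos y) :
    ∃ e : Fin (n + 2) ≃ Y, ∑ k, gap (e k) (e (k + 1)) ≤ c := by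
  let : LinearOrder Y := LinearOrder.lift' (fun y : Y => pos y) hpos.injective
  let e : Fin (n + 2) ≃o Y := Fintype.orderIsoFinOfCardEq Y (by simpa using hY)
  have hgap' : ∀ i j, i < j → gap (e i) (e j) + pos (e i) ≤ pos (e j) ∧
      gap (e j) (e i) + pos (e j) ≤ c + pos (e i) := fun i j hij =>
    hgap _ (e i).2 _ (e j).2 (e.strictMono hij)
  have hinit := sum_add_le_of_forall_castSucc (fun k => pos (e k))
    (fun k => gap (e k.castSucc) (e k.succ)) fun k => (hgap' _ _ Fin.castSucc_lt_succ).1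
  have hlast := (hgap' 0 (Fin.last (n + 1)) Fin.last_pos).2
  refine ⟨e.toEquiv, ?_⟩
  rw [Fin.sum_univ_castSucc]
  simp only [Fin.coeSucc_eq_succ, Fin.last_add_one, RelIso.coe_fn_toEquiv]
  linarith

theorem sum_le_of_cyclic_gaps (hY : 2 ≤ Y.card) (hpos : Set.InjOn pos Y) (w : α → ℕ)
    (hgap : ∀ y ∈ Y, ∀ y' ∈ Y, pos y < pos y' → w y + w y' + 2 * pos y ≤ 2 * pos y' ∧
      w y + w y' + 2 * pos y' ≤ 2 * c + 2 * pos y) : ∑ y ∈ Y, w y ≤ c := by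
  obtain ⟨n, hn⟩ := Nat.exists_eq_add_of_le' hY
  obtain ⟨e, he⟩ := exists_cyclic_enumeration (c := 2 * c) (pos := fun y => 2 * pos y) hn
    (fun a ha b hb hab => hpos ha hb (by simpa using hab)) (fun y y' => w y + w y')
    fun y hy y' hy' hlt => by have := hgap y hy y' hy' (by lia); lia
  have hsum : ∑ k : Fin (n + 2), w (e k) = ∑ y ∈ Y, w y := by
    exact (e.sum_comp fun y : Y => w y).trans (Finset.sum_coe_sort Y w)
  have hshift : ∑ k : Fin (n + 2), w (e (k + 1)) = ∑ k, w (e k) :=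
    Equiv.sum_comp (Equiv.addRight 1) fun k => w (e k)
  rw [Finset.sum_add_distrib, hshift, hsum] at he
  lia

theorem forall_fin_of_forall_add_one {p : Fin (n + 1) → Prop} (hp : ∀ k, p k → p (k + 1))
    {i : Fin (n + 1)} (hi : p i) (j : Fin (n + 1)) : p j := by
  have hadd : ∀ m : ℕ, p (i + Fin.ofNat (n + 1) m) := by
    intro m
    induction m with
    | zero => simpa using hi
    | succ m ih =>
      have hsucc := hp _ ih
      rwa [add_assoc, show Fin.ofNat (n + 1) m + 1 = Fin.ofNat (n + 1) (m + 1) by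
        ext; simp [Fin.val_add]] at hsucc
  simpa using hadd (j - i : Fin (n + 1))

variable [DecidableEq β]

theorem card_image_le_card_change (f : Fin (n + 1) → β)
    (hf : 2 ≤ (Finset.univ.image f).card) :
    (Finset.univ.image f).card ≤ ({k | f k ≠ f (k + 1)} : Finset _).card := by
  suffices hsub : Finset.univ.image f ⊆ ({k | f k ≠ f (k + 1)} : Finset _).image f from
    (Finset.card_le_card hsub).trans Finset.card_image_le
  intro b hb
  obtain ⟨i, -, rfl⟩ := Finset.mem_image.mp hb
  by_contra hi
  have hconst : ∀ k, f k = f i → f (k + 1) = f i := fun k hk => by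
    by_contra hne
    exact hi (Finset.mem_image.mpr ⟨k, by simpa [hk] using Ne.symm hne, hk⟩)
  have hall : ∀ k, f k = f i := forall_fin_of_forall_add_one hconst rfl
  have : (Finset.univ.image f).card ≤ 1 := Finset.card_le_one.mpr (by simp [hall])
  lia

theorem card_add_mul_card_image_le_of_cyclic_gaps (hpos : Set.InjOn pos Y) (cls : α → β)
    (hcls : 2 ≤ (Y.image cls).card)
    (hgap : ∀ y ∈ Y, ∀ y' ∈ Y, pos y < pos y' → 2 + pos y ≤ pos y' ∧ 2 + pos y' ≤ c + pos y)
    (hgap' : ∀ y ∈ Y, ∀ y' ∈ Y, pos y < pos y' → cls y ≠ cls y' →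
      d + 2 + pos y ≤ pos y' ∧ d + 2 + pos y' ≤ c + pos y) :
    2 * Y.card + d * (Y.image cls).card ≤ c := by
  obtain ⟨n, hn⟩ := Nat.exists_eq_add_of_le' (hcls.trans Finset.card_image_le)
  obtain ⟨e, he⟩ := exists_cyclic_enumeration (c := c) hn hpos
    (fun y y' => 2 + if cls y ≠ cls y' then d else 0) fun y hy y' hy' hlt => by
      have h2 := hgap y hy y' hy' hlt
      have hd := hgap' y hy y' hy' hlt
      grind
  have himage : Finset.univ.image (fun k => cls (e k)) = Y.image cls := by
    ext b
    simp only [Finset.mem_image, Finset.mem_univ, true_and]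
    exact ⟨fun ⟨k, hk⟩ => ⟨e k, (e k).2, hk⟩,
      fun ⟨y, hy, hyb⟩ => ⟨e.symm ⟨y, hy⟩, by simpa using hyb⟩⟩
  rw [← himage] at hcls ⊢
  have hchange := Nat.mul_le_mul_left d (card_image_le_card_change _ hcls)
  rw [Finset.sum_add_distrib, ← Finset.sum_filter] at he
  simp only [Finset.sum_const, Finset.card_univ, Fintype.card_fin, smul_eq_mul] at he
  lia

end CyclicSum

section Ear

variable {α β : Type*} {G : SimpleGraph V} {R U : Set V} {Q A B : List V} {a b : V} {m n : ℕ}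

/-- The vertices of a path from `a` to `b` are `a`, those of `l`, and `b`, where `l` lies in `U`. -/
structure IsPathThrough (G : SimpleGraph V) (U : Set V) (a b : V) (l : List V) : Prop where
  walk : IsListWalk G a b (a :: (l ++ [b]))
  nodup : l.Nodup
  mem : ∀ x ∈ l, x ∈ U

/-- There is a path of length at least `n` from `a` to `b` with all interior vertices in `U`. -/
def HasPathThrough (G : SimpleGraph V) (U : Set V) (n : ℕ) (a b : V) : Prop :=
  ∃ l, IsPathThrough G U a b l ∧ n ≤ l.length + 1

theorem HasPathThrough.symm (h : HasPathThrough G U n a b) : HasPathThrough G U n b a := by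
  obtain ⟨l, ⟨hl, hnd, hlU⟩, hn⟩ := h
  exact ⟨l.reverse, ⟨by simpa using hl.reverse, by simpa using hnd, by simpa using hlU⟩,
    by simpa using hn⟩

theorem HasPathThrough.mono (h : HasPathThrough G U n a b) (hmn : m ≤ n) :
    HasPathThrough G U m a b := by
  obtain ⟨l, hl, hn⟩ := h
  exact ⟨l, hl, hmn.trans hn⟩

/-- There is an ear of `Q` from `a` to `b` of length at least `n` running through `R`: a path
with no interior vertex on `Q` and with all interior vertices in `R`. -/
abbrev HasEar (G : SimpleGraph V) (R : Set V) (Q : List V) (n : ℕ) (a b : V) : Prop :=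
  HasPathThrough G {x | x ∉ Q ∧ x ∈ R} n a b

/-- `Q` is a longest cycle among those with all vertices in `R`. -/
structure IsLongestCycleIn (G : SimpleGraph V) (R : Set V) (Q : List V) : Prop where
  cycle : IsListCycle G Q
  mem : ∀ x ∈ Q, x ∈ R
  length_le : ∀ Q', IsListCycle G Q' → (∀ x ∈ Q', x ∈ R) → Q'.length ≤ Q.length

theorem IsListCycle.of_closed_walk {l : List V} (h : IsListWalk G a a (a :: (l ++ [a])))
    (hnd : (a :: l).Nodup) (hlen : 3 ≤ (a :: l).length) : IsListCycle G (a :: l) := by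
  obtain ⟨b, c, hl, hbc, hc⟩ := IsListWalk.of_append (l := a :: l) h (by simp) (by simp)
  obtain rfl := hc.eq_of_cons
  exact ⟨hlen, hnd, a, b, hl, hbc⟩

theorem IsLongestCycleIn.ear_length_le_arc (hQ : IsLongestCycleIn G R Q)
    (h : IsListCycle G (a :: (A ++ b :: B))) (hperm : (a :: (A ++ b :: B)).Perm Q)
    (hear : HasEar G R Q n a b) : n ≤ A.length + 1 := by
  obtain ⟨l, ⟨hl, hnd, hlR⟩, hn⟩ := hear
  by_contra! hlt
  have hclosed : IsListWalk G a a (a :: (l ++ b :: B ++ [a])) := by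
    simpa using IsListWalk.append_cons (l := a :: l) hl h.swap_arcs.walk_arc
  have hnd' : (a :: (l ++ b :: B)).Nodup := by
    have hlQ : ∀ x ∈ l, x ∉ a :: (A ++ b :: B) := fun x hx hx' =>
      (hlR x hx).1 (hperm.subset hx')
    have := h.nodup
    grind [List.nodup_cons, List.nodup_append]
  have hlen := hperm.length_eq
  have hthree := hQ.cycle.three_le
  simp only [List.length_cons, List.length_append] at hlen
  have hle := hQ.length_le _ (.of_closed_walk hclosed hnd' (by simp; lia)) fun x hx => by
    by_cases hxl : x ∈ l
    · exact (hlR x hxl).2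
    · exact hQ.mem x (hperm.subset (by grind))
  simp only [List.length_cons, List.length_append] at hle
  lia

theorem IsLongestCycleIn.ear_length_add_idxOf_le [DecidableEq V] (hQ : IsLongestCycleIn G R Q)
    (hb : b ∈ Q) (hlt : Q.idxOf a < Q.idxOf b) (hear : HasEar G R Q n a b) :
    n + Q.idxOf a ≤ Q.idxOf b ∧ n + Q.idxOf b ≤ Q.length + Q.idxOf a := by
  obtain ⟨X, b, Y, rfl, rfl, hX⟩ := exists_first_append (p := (· = b)) ⟨b, hb, rfl⟩
  have hbX : (X ++ b :: Y).idxOf b = X.length := by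
    rw [List.idxOf_append_of_notMem fun h => hX b h rfl]
    simp
  have haX : a ∈ X := by
    by_contra ha
    rw [hbX, List.idxOf_append_of_notMem ha] at hlt
    lia
  obtain ⟨X, a, A, rfl, rfl, hX'⟩ := exists_first_append (p := (· = a)) ⟨a, haX, rfl⟩
  have haX' : (X ++ a :: A ++ b :: Y).idxOf a = X.length := by
    rw [List.append_assoc, List.idxOf_append_of_notMem fun h => hX' a h rfl]
    simp
  have hcyc : IsListCycle G (a :: (A ++ b :: (Y ++ X))) := by
    simpa using IsListCycle.rotate (l := X) (m := a :: (A ++ b :: Y)) (by simpa using hQ.cycle)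
  have hperm : (a :: (A ++ b :: (Y ++ X))).Perm (X ++ a :: A ++ b :: Y) := by
    simpa using List.perm_append_comm (l₁ := a :: (A ++ b :: Y)) (l₂ := X)
  have hA := hQ.ear_length_le_arc hcyc hperm hear
  have hB := hQ.ear_length_le_arc hcyc.swap_arcs
    ((List.perm_append_comm (l₁ := b :: (Y ++ X)) (l₂ := a :: A)).trans hperm) hear.symm
  simp only [haX', hbX, List.length_append, List.length_cons] at hA hB ⊢
  lia

variable {Y : Finset α} {φ : α → V}

theorem injOn_idxOf_comp [DecidableEq V] (hφ : Set.InjOn φ Y) (hmem : ∀ y ∈ Y, φ y ∈ Q) :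
    Set.InjOn (fun y => Q.idxOf (φ y)) Y := fun a ha _ hb hab =>
  hφ ha hb ((List.idxOf_inj (hmem a ha)).mp hab)

theorem IsLongestCycleIn.sum_le_length (hQ : IsLongestCycleIn G R Q) (hφ : Set.InjOn φ Y)
    (hmem : ∀ y ∈ Y, φ y ∈ Q) (w : α → ℕ) (hY : 2 ≤ Y.card)
    (hear : ∀ y ∈ Y, ∀ y' ∈ Y, y ≠ y' →
      ∃ n, HasEar G R Q n (φ y) (φ y') ∧ w y + w y' ≤ 2 * n) : ∑ y ∈ Y, w y ≤ Q.length := by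
  classical
  refine sum_le_of_cyclic_gaps hY (injOn_idxOf_comp hφ hmem) w fun y hy y' hy' hlt => ?_
  obtain ⟨n, hn, hw⟩ := hear y hy y' hy' (by rintro rfl; exact hlt.false)
  have := hQ.ear_length_add_idxOf_le (hmem y' hy') hlt hn
  lia

theorem IsLongestCycleIn.card_add_mul_card_image_le_length [DecidableEq β]
    (hQ : IsLongestCycleIn G R Q) (hφ : Set.InjOn φ Y) (hmem : ∀ y ∈ Y, φ y ∈ Q) (cls : α → β)
    {d : ℕ} (hcls : 2 ≤ (Y.image cls).card)
    (hear : ∀ y ∈ Y, ∀ y' ∈ Y, y ≠ y' → HasEar G R Q 2 (φ y) (φ y'))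
    (hear' : ∀ y ∈ Y, ∀ y' ∈ Y, y ≠ y' → cls y ≠ cls y' → HasEar G R Q (d + 2) (φ y) (φ y')) :
    2 * Y.card + d * (Y.image cls).card ≤ Q.length := by
  classical
  exact card_add_mul_card_image_le_of_cyclic_gaps (injOn_idxOf_comp hφ hmem) cls hcls
    (fun y hy y' hy' hlt => hQ.ear_length_add_idxOf_le (hmem y' hy') hlt
      (hear y hy y' hy' (by rintro rfl; exact hlt.false)))
    fun y hy y' hy' hlt hne => hQ.ear_length_add_idxOf_le (hmem y' hy') hlt
      (hear' y hy y' hy' (by rintro rfl; exact hlt.false) hne)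

end Ear

/-! ### Linked sets and rotations of longest paths -/

section LinkedSet

variable {G : SimpleGraph V} {S T U : Finset V} {Q : List V} {x y : V} {k m t : ℕ}

/-- `S` contains a set `Z` of more than `k` vertices any two of which are joined by a path inside
`Z` with more than `k` vertices. -/
def HasLinkedSet (G : SimpleGraph V) (S : Finset V) (k : ℕ) : Prop :=
  ∃ Z ⊆ S, k + 1 ≤ Z.card ∧ (Z : Set V).Pairwise (HasPathIn G Z (k + 1))

theorem HasLinkedSet.mono (h : HasLinkedSet G S k) (hST : S ⊆ T) (hmk : m ≤ k) :
    HasLinkedSet G T m := by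
  obtain ⟨Z, hZ, hcard, hpath⟩ := h
  exact ⟨Z, hZ.trans hST, by lia, hpath.imp fun a b h => h.mono subset_rfl (by lia)⟩

theorem hasLinkedSet_zero (G : SimpleGraph V) (hx : x ∈ S) : HasLinkedSet G S 0 :=
  ⟨{x}, by simpa using hx, by simp, by simp⟩

theorem hasLinkedSet_one (hx : x ∈ S) (hy : y ∈ S) (hxy : G.Adj x y) : HasLinkedSet G S 1 := by
  classical
  have hpath : HasPathIn G {x, y} 2 x y :=
    ⟨[x, y], .cons hxy (.singleton G y), by simpa using hxy.ne, by simp, le_rfl⟩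
  refine ⟨{x, y}, by grind, (Finset.card_pair hxy.ne).ge, ?_⟩
  rw [Finset.coe_pair]
  exact Set.pairwise_pair.mpr fun _ => ⟨hpath, hpath.symm⟩

theorem HasPathIn.le_card (h : HasPathIn G S k x y) : k ≤ S.card := by
  classical
  obtain ⟨l, -, hnd, hl, hk⟩ := h
  rw [← List.toFinset_card_of_nodup hnd] at hk
  exact hk.trans (Finset.card_le_card fun x hx => hl x (List.mem_toFinset.mp hx))

theorem IsListCycle.hasLinkedSet [DecidableEq V] (h : IsListCycle G Q) (hQ : ∀ x ∈ Q, x ∈ S)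
    (hpath : ∀ y ∈ Q, ∀ z ∈ Q, y ≠ z → HasPathIn G Q.toFinset (t + 1) y z) :
    HasLinkedSet G S t := by
  have hcard : Q.toFinset.card = Q.length := List.toFinset_card_of_nodup h.nodup
  have hthree := h.three_le
  obtain ⟨y, hy, z, hz, hyz⟩ := Finset.one_lt_card.mp (by lia : 1 < Q.toFinset.card)
  rw [List.mem_toFinset] at hy hz
  exact ⟨Q.toFinset, fun x hx => hQ x (List.mem_toFinset.mp hx), (hpath y hy z hz hyz).le_card,
    fun y hy z hz => hpath y (by simpa using hy) z (by simpa using hz)⟩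

theorem IsListCycle.hasLinkedSet_of_two_mul_le (h : IsListCycle G Q) (hQ : ∀ x ∈ Q, x ∈ S)
    (ht : 2 * t ≤ Q.length) : HasLinkedSet G S t := by
  classical
  exact h.hasLinkedSet hQ fun y hy z hz hyz => h.hasPathIn_of_two_mul_le ht hy hz hyz

theorem degIn_le_degIn (h : ∀ y ∈ S, G.Adj x y → y ∈ T) : degIn G S x ≤ degIn G T x := by
  classical
  exact Finset.card_le_card fun y hy => by
    have hy' := Finset.mem_filter.mp hy
    exact Finset.mem_filter.mpr ⟨h y hy'.1 hy'.2, hy'.2⟩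

theorem degIn_le_degIn_add_card (h : ∀ y ∈ T, G.Adj x y → y ∈ S ∨ y ∈ U) :
    degIn G T x ≤ degIn G S x + U.card := by
  classical
  refine (Finset.card_le_card fun y hy => ?_).trans (Finset.card_union_le _ _)
  rw [Finset.mem_filter] at hy
  rw [Finset.mem_union, Finset.mem_filter]
  exact (h y hy.1 hy.2).imp_left fun hyS => ⟨hyS, hy.2⟩

end LinkedSet

section Rotation

variable {G : SimpleGraph V} {S : Finset V} {l m X Y : List V} {a e v w : V} {t : ℕ}

theorem countP_le_countP_tail_of_isChain {R T : V → Bool}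
    (h : (l ++ [e]).IsChain fun v w => R v → T w) : l.countP R ≤ (l ++ [e]).tail.countP T := by
  induction l with
  | nil => simp
  | cons a l ih =>
    rcases l with _ | ⟨b, l⟩
    · grind
    · rw [List.cons_append, List.cons_append, List.isChain_cons_cons] at h
      have htail := ih h.2
      have := h.1
      rw [List.cons_append, List.tail_cons] at htail
      rw [List.cons_append, List.cons_append, List.tail_cons, List.countP_cons (a := a),
        List.countP_cons (a := b) (l := l ++ [e])]
      grind

/-- A Pósa rotation: the end `e` of a path is joined back to `v`, and the segment after `v` is
reversed. -/
theorem IsListWalk.rotate_end (h : IsListWalk G a e (l ++ v :: w :: m)) (hev : G.Adj e v) :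
    IsListWalk G a w (l ++ v :: (w :: m).reverse) := by
  have hwe : IsListWalk G w e (w :: m) :=
    (IsListWalk.of_append_cons (l := l ++ [v]) (by simpa using h)).2
  simpa using h.of_append_cons.1.append hev.symm hwe.reverse

theorem IsListWalk.exists_perm_forall_not_adj (h : IsListWalk G a e l)
    (hadj : ∃ w ∈ l, G.Adj e w) :
    ∃ X w Y e', IsListWalk G a e' (X ++ w :: Y) ∧ (X ++ w :: Y).Perm l ∧ G.Adj e' w ∧
      ∀ Y' v, IsListWalk G a v (X ++ Y') → (X ++ Y').Perm l → ∀ x ∈ X, ¬ G.Adj v x := by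
  obtain ⟨w, hw, hew⟩ := hadj
  obtain ⟨X, Y, rfl⟩ := List.append_of_mem hw
  obtain ⟨X', ⟨w', Y', e', hwalk, hperm, hadj⟩, hmin⟩ :=
    (measure (List.length (α := V))).wf.has_min
      {X' | ∃ w' Y' e', IsListWalk G a e' (X' ++ w' :: Y') ∧
        (X' ++ w' :: Y').Perm (X ++ w :: Y) ∧ G.Adj e' w'}
      ⟨X, w, Y, e, h, .refl _, hew⟩
  refine ⟨X', w', Y', e', hwalk, hperm, hadj, fun Z v hv hZ x hx hvx => ?_⟩
  obtain ⟨X₁, X₂, rfl⟩ := List.append_of_mem hx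
  exact hmin X₁ ⟨x, X₂ ++ Z, v, by simpa using hv, by simpa using hZ, hvx⟩
    (by simp : X₁.length < (X₁ ++ x :: X₂).length)

theorem le_countP_degIn_of_rotations [DecidableEq V] (hw : IsListWalk G a e (X ++ Y))
    (hY : Y.Nodup) (hYe : IsListWalk G w e Y)
    (hdeg : ∀ Y' v, IsListWalk G a v (X ++ Y') → Y'.Perm Y → t ≤ degIn G Y.toFinset v) :
    t ≤ Y.countP fun v => t ≤ degIn G Y.toFinset v := by
  classical
  obtain ⟨Z, rfl⟩ := hYe.exists_eq_concat
  have hsucc : (Z ++ [e]).IsChain fun v v' =>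
      decide (G.Adj e v) → decide (t ≤ degIn G (Z ++ [e]).toFinset v') := by
    refine List.isChain_iff_forall_rel_of_append_cons_cons.mpr fun v v' M N hZ hev => ?_
    rw [hZ, ← List.append_assoc] at hw
    have hrot := hw.rotate_end (of_decide_eq_true hev)
    refine decide_eq_true (hdeg (M ++ v :: (v' :: N).reverse) v' (by simpa using hrot) ?_)
    rw [hZ]
    exact .append_left _ (.cons _ (List.reverse_perm _))
  calc t ≤ degIn G (Z ++ [e]).toFinset e := hdeg _ e hw (.refl _)
    _ = Z.countP fun v => G.Adj e v := by rw [degIn_toFinset hY]; simp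
    _ ≤ _ := countP_le_countP_tail_of_isChain hsucc
    _ ≤ _ := (List.tail_sublist _).countP_le

theorem hasLinkedSet_of_rotations (ht : 2 ≤ t) (hw : IsListWalk G a e l) (hnd : l.Nodup)
    (hS : ∀ x ∈ l, x ∈ S)
    (hend : ∀ l' v, IsListWalk G a v l' → l'.Perm l →
      (∀ x ∈ S, G.Adj v x → x ∈ l) ∧ t ≤ degIn G S v) : HasLinkedSet G S t := by
  classical
  have hadj : ∃ w ∈ l, G.Adj e w := by
    obtain ⟨w, hw'⟩ := Finset.card_pos.mp (by have := (hend l e hw (.refl _)).2; lia :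
      0 < degIn G S e)
    rw [Finset.mem_filter] at hw'
    exact ⟨w, (hend l e hw (.refl _)).1 w hw'.1 hw'.2, hw'.2⟩
  obtain ⟨X, w, Y, e', hw', hperm, hadj', hX⟩ := hw.exists_perm_forall_not_adj hadj
  have hdeg : ∀ Y' v, IsListWalk G a v (X ++ Y') → Y'.Perm (w :: Y) →
      t ≤ degIn G (w :: Y).toFinset v := fun Y' v hv hY' => by
    have hperm' := (hY'.append_left X).trans hperm
    obtain ⟨hnbr, htv⟩ := hend _ v hv hperm'
    refine htv.trans (degIn_le_degIn fun x hx hvx => ?_)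
    have hxl := hperm.symm.subset (hnbr x hx hvx)
    exact List.mem_toFinset.mpr <| (List.mem_append.mp hxl).resolve_left fun hxX =>
      hX Y' v hv hperm' x hxX hvx
  have hYw : IsListWalk G w e' (w :: Y) := hw'.of_append_cons.2
  have hYnd : (w :: Y).Nodup := (hperm.nodup_iff.mpr hnd).of_append_right
  have hcard := (hdeg _ e' hw' (.refl _)).trans_lt
    (degIn_lt_card (List.mem_toFinset.mpr hYw.last_mem))
  rw [List.toFinset_card_of_nodup hYnd] at hcard
  have hcycle : IsListCycle G (w :: Y) := ⟨by lia, hYnd, w, e', hYw, hadj'⟩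
  exact hcycle.hasLinkedSet (fun x hx => hS x (hperm.subset (by simp_all)))
    fun y hy z hz hyz => hcycle.hasPathIn_of_le_countP_degIn ht
      (le_countP_degIn_of_rotations hw' hYnd hYw hdeg) hy hz hyz

theorem exists_path_forall_perm_adj_mem (G : SimpleGraph V) (ha : a ∈ S) :
    ∃ l e, IsListWalk G a e l ∧ l.Nodup ∧ (∀ x ∈ l, x ∈ S) ∧
      ∀ l' v, IsListWalk G a v l' → l'.Perm l → ∀ x ∈ S, G.Adj v x → x ∈ l := by
  classical
  obtain ⟨l, ⟨e, hw, hnd, hS⟩, hmax⟩ := (measure fun l : List V => S.card - l.length).wf.has_min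
    {l | ∃ e, IsListWalk G a e l ∧ l.Nodup ∧ ∀ x ∈ l, x ∈ S}
    ⟨[a], a, .singleton G a, by simp, by simpa using ha⟩
  refine ⟨l, e, hw, hnd, hS, fun l' v hw' hperm x hx hvx => ?_⟩
  by_contra hxl
  have hnd' : (l' ++ [x]).Nodup := by
    rw [← List.concat_eq_append, List.nodup_concat, hperm.mem_iff, hperm.nodup_iff]
    exact ⟨hxl, hnd⟩
  have hS' : ∀ y ∈ l' ++ [x], y ∈ S := by
    have := fun y (hy : y ∈ l') => hS y (hperm.subset hy)
    grind
  have hcard : (l' ++ [x]).length ≤ S.card := by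
    rw [← List.toFinset_card_of_nodup hnd']
    exact Finset.card_le_card fun y hy => hS' y (List.mem_toFinset.mp hy)
  refine hmax _ ⟨x, hw'.concat hvx, hnd', hS'⟩ (?_ : S.card - _ < S.card - l.length)
  rw [List.length_append, List.length_singleton, hperm.length_eq] at hcard ⊢
  lia

theorem hasLinkedSet_of_forall_le_degIn (hS : S.Nonempty) (h : ∀ x ∈ S, t ≤ degIn G S x) :
    HasLinkedSet G S t := by
  obtain ⟨a, ha⟩ := hS
  match t with
  | 0 => exact hasLinkedSet_zero G ha
  | 1 =>
    classical
    obtain ⟨b, hb⟩ := Finset.card_pos.mp (h a ha)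
    rw [Finset.mem_filter] at hb
    exact hasLinkedSet_one ha hb.1 hb.2
  | t + 2 =>
    obtain ⟨l, e, hw, hnd, hlS, hend⟩ := exists_path_forall_perm_adj_mem G ha
    exact hasLinkedSet_of_rotations (by lia) hw hnd hlS fun l' v hw' hperm =>
      ⟨hend l' v hw' hperm, h v (hlS v (hperm.subset hw'.last_mem))⟩

end Rotation

section ComponentOutsideCycle

variable {G : SimpleGraph V} {S : Finset V} {U : Set V} {Q l s : List V} {a b c e u v x : V}
  {t : ℕ}

/-- There is a walk from `a` to `b` all of whose vertices lie in `U`. -/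
def ReachableIn (G : SimpleGraph V) (U : Set V) (a b : V) : Prop :=
  ∃ l, IsListWalk G a b l ∧ ∀ x ∈ l, x ∈ U

theorem reachableIn_refl (G : SimpleGraph V) (ha : a ∈ U) : ReachableIn G U a a :=
  ⟨[a], .singleton G a, by simpa using ha⟩

theorem ReachableIn.right_mem (h : ReachableIn G U a b) : b ∈ U := by
  obtain ⟨l, hl, hU⟩ := h
  exact hU b hl.last_mem

theorem ReachableIn.concat (h : ReachableIn G U a b) (hbc : G.Adj b c) (hc : c ∈ U) :
    ReachableIn G U a c := by
  obtain ⟨l, hl, hU⟩ := h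
  exact ⟨l ++ [c], hl.concat hbc, by grind⟩

theorem IsLongestCycleIn.two_mul_degIn_le_length (hQ : IsLongestCycleIn G S Q) (hu : u ∈ Q)
    (hw : IsListWalk G u e (u :: s)) (hnd : s.Nodup) (hs : ∀ v ∈ s, v ∉ Q ∧ v ∈ S) (hes : e ∈ s)
    (hnbr : ∀ v ∈ S, G.Adj e v → v ∈ s ∨ v ∈ Q) (hfar : ∃ v ∈ Q, v ≠ u ∧ G.Adj e v) :
    2 * degIn G S e ≤ Q.length := by
  classical
  set W := {v ∈ Q.toFinset | v ≠ u ∧ G.Adj e v} with hW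
  have hWmem : ∀ v, v ∈ W ↔ v ∈ Q ∧ v ≠ u ∧ G.Adj e v := by simp [W]
  have hdeg : degIn G S e ≤ s.length + W.card := by
    have hsub : {v ∈ S | G.Adj e v} ⊆ insert u (s.toFinset.erase e ∪ W) := fun v hv => by
      have hv' := Finset.mem_filter.mp hv
      have := hv'.2.ne'
      have := hnbr v hv'.1 hv'.2
      simp only [Finset.mem_insert, Finset.mem_union, Finset.mem_erase, List.mem_toFinset, hWmem]
      tauto
    have hcard := (Finset.card_le_card hsub).trans (Finset.card_insert_le _ _)
    have hunion := Finset.card_union_le (s.toFinset.erase e) W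
    rw [Finset.card_erase_of_mem (List.mem_toFinset.mpr hes),
      List.toFinset_card_of_nodup hnd] at hunion
    have := List.length_pos_of_mem hes
    rw [degIn]
    lia
  have huW : u ∉ W := by simp [hWmem]
  have hWcard : 0 < W.card := Finset.card_pos.mpr (hfar.imp fun v hv => (hWmem v).mpr hv)
  have hlong : ∀ v ∈ W, HasEar G S Q (s.length + 1) u v := fun v hv =>
    ⟨s, ⟨hw.concat ((hWmem v).mp hv).2.2, hnd, hs⟩, le_rfl⟩
  have hshort : ∀ v ∈ W, ∀ w ∈ W, HasEar G S Q 2 v w := fun v hv w hw' =>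
    ⟨[e], ⟨.cons ((hWmem v).mp hv).2.2.symm (.cons ((hWmem w).mp hw').2.2 (.singleton G w)),
      by simp, by simpa using hs e hes⟩, by simp⟩
  have hsum := hQ.sum_le_length (Y := insert u W) (φ := id) Function.injective_id.injOn
    (by simp +contextual [hu, hWmem]) (fun v => if v = u then 2 * s.length else 2)
    (by rw [Finset.card_insert_of_notMem huW]; lia) fun v hv w hw' hvw => by
      rw [Finset.mem_insert] at hv hw'
      rcases hv with rfl | hv <;> rcases hw' with rfl | hw'
      · exact absurd rfl hvw
      · exact ⟨_, hlong w hw', by grind⟩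
      · exact ⟨_, (hlong v hv).symm, by grind⟩
      · exact ⟨2, hshort v hv w hw', by grind⟩
  rw [Finset.sum_insert huW, Finset.sum_congr rfl fun v hv => if_neg ((hWmem v).mp hv).2.1,
    if_pos rfl, Finset.sum_const, smul_eq_mul] at hsum
  lia

theorem IsListWalk.exists_eq_cons_of_forall_adj_mem [DecidableEq V] {J : Finset V}
    (h : IsListWalk G u v l) (hnd : l.Nodup) (hl : ∀ y ∈ l, y ∈ insert u J)
    (hv : ∀ y ∈ insert u J, G.Adj v y → y ∈ l) (hx : x ∈ J) (hux : G.Adj u x) :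
    ∃ s, l = u :: s ∧ v ∈ s ∧ (∀ y ∈ s, y ∈ J) ∧ ∀ y ∈ J, y ≠ u → G.Adj v y → y ∈ s := by
  obtain ⟨s, rfl⟩ := h.exists_eq_cons
  have hs : ∀ y ∈ J, y ≠ u → G.Adj v y → y ∈ s := fun y hy hyu hvy =>
    (List.mem_cons.mp (hv y (Finset.mem_insert_of_mem hy) hvy)).resolve_left hyu
  refine ⟨s, rfl, ?_, fun y hy => (Finset.mem_insert.mp
    (hl y (List.mem_cons_of_mem u hy))).resolve_left
      (ne_of_mem_of_not_mem hy (List.nodup_cons.mp hnd).1), hs⟩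
  rcases List.eq_nil_or_concat' s with rfl | ⟨m, b, rfl⟩
  · obtain rfl : u = v := h.eq_of_concat (l := [])
    exact absurd (hs x hx hux.ne' hux) (by simp)
  · obtain rfl : b = v := h.eq_of_concat (l := u :: m)
    simp

theorem IsLongestCycleIn.exists_reachableIn_degIn_lt (hQ : IsLongestCycleIn G S Q) (ht : 2 ≤ t)
    (hS : ¬ HasLinkedSet G S t) (hu : u ∈ Q) (hx : x ∈ S) (hxQ : x ∉ Q) (hux : G.Adj u x) :
    ∃ v, ReachableIn G {v | v ∉ Q ∧ v ∈ S} x v ∧ degIn G S v < t := by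
  classical
  by_contra! hdeg
  set J := {v ∈ S | ReachableIn G {v | v ∉ Q ∧ v ∈ S} x v} with hJ
  have hJmem : ∀ v, v ∈ J ↔ ReachableIn G {v | v ∉ Q ∧ v ∈ S} x v := fun v => by
    rw [hJ, Finset.mem_filter, and_iff_right_of_imp fun h => h.right_mem.2]
  obtain ⟨l, e, hw, hnd, hl, hend⟩ :=
    exists_path_forall_perm_adj_mem G (Finset.mem_insert_self u J)
  have hxJ : x ∈ J := (hJmem x).mpr (reachableIn_refl G ⟨hxQ, hx⟩)
  have hrot : ∀ l' v, IsListWalk G u v l' → l'.Perm l →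
      ∃ s, l' = u :: s ∧ v ∈ s ∧ (∀ w ∈ s, w ∈ J) ∧ ∀ w ∈ S, G.Adj v w → w ∈ s ∨ w ∈ Q := by
    intro l' v hw' hperm
    obtain ⟨s, rfl, hvs, hsJ, hJs⟩ := hw'.exists_eq_cons_of_forall_adj_mem
      (hperm.nodup_iff.mpr hnd) (fun w hw => hl w (hperm.subset hw))
      (fun w hw hvw => hperm.symm.subset (hend _ v hw' hperm w hw hvw)) hxJ hux
    refine ⟨s, rfl, hvs, hsJ, fun w hwS hvw => ?_⟩
    by_contra! hw
    exact hw.1 (hJs w ((hJmem w).mpr (((hJmem v).mp (hsJ v hvs)).concat hvw ⟨hw.2, hwS⟩))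
      (ne_of_mem_of_not_mem hu hw.2).symm hvw)
  by_cases hfar : ∃ l' v, IsListWalk G u v l' ∧ l'.Perm l ∧ ∃ w ∈ Q, w ≠ u ∧ G.Adj v w
  · obtain ⟨l', v, hw', hperm, hfar⟩ := hfar
    obtain ⟨s, rfl, hvs, hs, hnbr⟩ := hrot l' v hw' hperm
    have hsQ : ∀ w ∈ s, w ∉ Q ∧ w ∈ S := fun w hw => ((hJmem w).mp (hs w hw)).right_mem
    have hlen := hQ.two_mul_degIn_le_length hu hw' (hperm.nodup_iff.mpr hnd).of_cons hsQ hvs hnbr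
      hfar
    have htv := hdeg v ((hJmem v).mp (hs v hvs))
    exact hS (hQ.cycle.hasLinkedSet_of_two_mul_le hQ.mem (by lia))
  · push Not at hfar
    refine hS (hasLinkedSet_of_rotations ht hw hnd ?_ fun l' v hw' hperm => ?_)
    · intro w hw
      rcases Finset.mem_insert.mp (hl w hw) with rfl | hwJ
      exacts [hQ.mem w hu, (Finset.mem_filter.mp hwJ).1]
    · obtain ⟨s, rfl, hvs, hs, hnbr⟩ := hrot l' v hw' hperm
      refine ⟨fun w hwS hvw => hperm.subset (List.mem_cons.mpr ?_),
        hdeg v ((hJmem v).mp (hs v hvs))⟩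
      refine (hnbr w hwS hvw).symm.imp_left fun hwQ => ?_
      by_contra hwu
      exact hfar _ v hw' hperm w hwQ hwu hvw

end ComponentOutsideCycle

/-! ### Sets of minimum boundary -/

section Linkage

variable {G H : SimpleGraph V} {A B : Finset V} {U : Set V} {l : List V} {a b : V}

theorem IsListWalk.forall_mem_of_adj (h : IsListWalk H a b l) (hU : ∀ x y, H.Adj x y → x ∈ U)
    (hb : b ∈ U) : ∀ x ∈ l, x ∈ U := fun x hx => by
  obtain ⟨l₁, l₂, rfl⟩ := List.append_of_mem hx
  rcases l₂ with _ | ⟨y, l₂⟩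
  · rwa [h.eq_of_concat]
  · exact hU x y (List.isChain_cons_cons.mp h.of_append_cons.2.chain).1

theorem exists_full_linkage_in [Finite V] (hBU : ∀ b ∈ B, b ∈ U)
    (h : ∀ T : Finset V, (∀ a ∈ A, ∀ b ∈ B, ¬ ReachableIn G (U \ T) a b) → B.card ≤ T.card) :
    ∃ f, IsLinkage G A B B f ∧ ∀ b ∈ B, ∀ x ∈ f b, x ∈ U := by
  let K := ((⊤ : G.Subgraph).induce U).spanningCoe
  have hKG : ∀ {a b l}, IsListWalk K a b l → IsListWalk G a b l := fun hl =>
    hl.mono fun x _ y _ hxy => hxy.2.2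
  obtain ⟨f, hpath, hdisj⟩ := exists_full_linkage (G := K) (A := A) (B := B) (Set.toFinite _)
    fun T hT => h T fun a ha b hb ⟨l, hl, hlU⟩ => by
      obtain ⟨x, hx, hxT⟩ :=
        hT ha hb (hl.mono fun x hx y hy hxy => ⟨(hlU x hx).1, (hlU y hy).1, hxy⟩)
      exact (hlU x hx).2 hxT
  refine ⟨f, ⟨fun b hb => ?_, hdisj⟩, fun b hb => ?_⟩
  · obtain ⟨a, ha⟩ := hpath b hb
    exact ⟨a, hKG ha.walk, ha.nodup, ha.start_mem, ha.end_mem, ha.eq_start, ha.eq_end⟩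
  · obtain ⟨a, ha⟩ := hpath b hb
    exact ha.walk.forall_mem_of_adj (fun x y hxy => hxy.1) (hBU b hb)

end Linkage

section Boundary

variable [Fintype V] {G : SimpleGraph V} {Z Ω : Finset V} {U : Set V} {y : V}

open Classical in
/-- The vertices outside `Ω` that have a neighbour in `Ω`. -/
noncomputable def outerBoundary (G : SimpleGraph V) (Ω : Finset V) : Finset V :=
  {v | v ∉ Ω ∧ ∃ x ∈ Ω, G.Adj v x}

theorem mem_outerBoundary : y ∈ outerBoundary G Ω ↔ y ∉ Ω ∧ ∃ x ∈ Ω, G.Adj y x := by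
  simp [outerBoundary]

open Classical in
/-- The vertices that can be reached from `Z` inside `U`. -/
noncomputable def reachSet (G : SimpleGraph V) (Z : Finset V) (U : Set V) : Finset V :=
  {v | ∃ z ∈ Z, ReachableIn G U z v}

theorem mem_reachSet : y ∈ reachSet G Z U ↔ ∃ z ∈ Z, ReachableIn G U z y := by
  simp [reachSet]

theorem mem_of_mem_reachSet (h : y ∈ reachSet G Z U) : y ∈ U := by
  obtain ⟨z, -, hz⟩ := mem_reachSet.mp h
  exact hz.right_mem

theorem subset_reachSet (h : ∀ z ∈ Z, z ∈ U) : Z ⊆ reachSet G Z U := fun z hz =>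
  mem_reachSet.mpr ⟨z, hz, reachableIn_refl G (h z hz)⟩

theorem notMem_of_mem_outerBoundary_reachSet (h : y ∈ outerBoundary G (reachSet G Z U)) :
    y ∉ U := by
  obtain ⟨hy, x, hx, hyx⟩ := mem_outerBoundary.mp h
  obtain ⟨z, hz, hzx⟩ := mem_reachSet.mp hx
  exact fun hyU => hy (mem_reachSet.mpr ⟨z, hz, hzx.concat hyx.symm hyU⟩)

theorem exists_walk_of_mem_outerBoundary_reachSet (h : y ∈ outerBoundary G (reachSet G Z U)) :
    ∃ z ∈ Z, ∃ l, IsListWalk G y z (y :: l) ∧ ∀ x ∈ l, x ∈ U := by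
  obtain ⟨-, x, hx, hyx⟩ := mem_outerBoundary.mp h
  obtain ⟨z, hz, l, hl, hlU⟩ := mem_reachSet.mp hx
  exact ⟨z, hz, l.reverse, .cons hyx hl.reverse, by simpa using hlU⟩

theorem mem_outerBoundary_of_reachSet (hU : ∀ x ∈ U, x ∈ Ω) (hy : y ∉ Ω)
    (h : y ∈ outerBoundary G (reachSet G Z U)) : y ∈ outerBoundary G Ω := by
  obtain ⟨-, x, hx, hyx⟩ := mem_outerBoundary.mp h
  exact mem_outerBoundary.mpr ⟨hy, x, hU x (mem_of_mem_reachSet hx), hyx⟩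

end Boundary

section Access

variable {G : SimpleGraph V} {Z Ω : Finset V} {U : Set V} {l s s' : List V} {a b u y y' z : V}
  {k : ℕ}

open Classical in
/-- The vertices of `Z` at which a path from `y` through `Ω` can enter `Z`. -/
noncomputable def entrances (G : SimpleGraph V) (Ω Z : Finset V) (y : V) : Finset V :=
  {u ∈ Z | ∃ s, IsPathThrough G (Ω \ Z) y u s}

theorem mem_entrances : u ∈ entrances G Ω Z y ↔ u ∈ Z ∧ ∃ s, IsPathThrough G (Ω \ Z) y u s := by
  simp [entrances]

theorem IsListWalk.exists_isPathThrough (h : IsListWalk G y z (y :: l)) (hy : y ∉ Z) (hz : z ∈ Z)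
    (hl : ∀ x ∈ l, x ∈ Ω) : ∃ u ∈ Z, ∃ s, IsPathThrough G (Ω \ Z) y u s ∧ u ∈ l ∧ s ⊆ l := by
  obtain ⟨y₀, u, m, hm, hml⟩ := h.exists_isPathBetween (Finset.mem_singleton_self y) hz
  obtain rfl := Finset.mem_singleton.mp hm.start_mem
  have hyu : y₀ ≠ u := fun h => hy (h ▸ hm.end_mem)
  obtain ⟨s, rfl⟩ := hm.walk.exists_eq_cons_concat hyu
  have hnd := hm.nodup
  have heq := hm.eq_end
  have hsl : ∀ x ∈ s, x ∈ l := fun x hx =>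
    (List.mem_cons.mp (hml (by simp [hx]))).resolve_left (by grind)
  have hsZ : ∀ x ∈ s, x ∉ Z := fun x hx hxZ => by
    have := heq x (by simp [hx]) hxZ
    grind
  exact ⟨u, hm.end_mem, s, ⟨hm.walk, by grind, fun x hx => ⟨hl x (hsl x hx), hsZ x hx⟩⟩,
    (List.mem_cons.mp (hml (by simp))).resolve_left hyu.symm, hsl⟩

theorem IsPathThrough.hasPathThrough_two (h : IsPathThrough G U y u s)
    (h' : IsPathThrough G U y' u s') (hu : u ∈ U) : HasPathThrough G U 2 y y' := by
  obtain ⟨b, c, hb, hbc, hc⟩ := IsListWalk.of_append (l := [y]) h.walk (by simp) (by simp)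
  obtain ⟨b', c', hb', hbc', hc'⟩ := IsListWalk.of_append (l := [y']) h'.walk (by simp) (by simp)
  obtain rfl := hb.eq_of_concat (l := [])
  obtain rfl := hb'.eq_of_concat (l := [])
  obtain ⟨k, hk, hks⟩ := hc.trans hc'.reverse
  obtain ⟨m, hm, hnd, hmk⟩ := hk.exists_nodup
  have hs := h.mem
  have hs' := h'.mem
  refine ⟨m, ⟨.cons hbc (hm.concat hbc'.symm), hnd, fun x hx => ?_⟩,
    Nat.succ_le_succ (List.length_pos_iff.mpr hm.ne_nil)⟩
  have hx := hks x (hmk hx)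
  simp only [List.append_eq, List.mem_append, List.mem_reverse, List.mem_singleton] at hx
  grind

theorem IsPathThrough.hasPathThrough_of_disjoint (h : IsPathThrough G (Ω \ Z) y a s)
    (h' : IsPathThrough G (Ω \ Z) y' b s') (hZ : Z ⊆ Ω) (hss' : s.Disjoint s')
    (hab : HasPathIn G Z k a b) : HasPathThrough G Ω (k + 1) y y' := by
  obtain ⟨m, hm, hnd, hmZ, hk⟩ := hab
  obtain ⟨c, d, hc, hcd, hd⟩ := IsListWalk.of_append (l := y :: s) h.walk (by simp) (by simp)
  obtain ⟨c', d', hc', hcd', hd'⟩ :=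
    IsListWalk.of_append (l := y' :: s') h'.walk (by simp) (by simp)
  obtain rfl := hd.eq_of_cons
  obtain rfl := hd'.eq_of_cons
  refine ⟨s ++ m ++ s'.reverse,
    ⟨by simpa using hc.append hcd (hm.append hcd'.symm hc'.reverse), ?_, ?_⟩, by grind⟩
  · have hs : ∀ x ∈ s, x ∉ Z := fun x hx => (h.mem x hx).2
    have hs' : ∀ x ∈ s', x ∉ Z := fun x hx => (h'.mem x hx).2
    have := h.nodup
    have := h'.nodup
    grind [List.nodup_append, List.Disjoint]
  · intro x hx
    simp only [List.mem_append, List.mem_reverse] at hx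
    rcases hx with (hx | hx) | hx
    exacts [(h.mem x hx).1, hZ (hmZ x hx), (h'.mem x hx).1]

theorem hasPathThrough_two_of_mem_entrances (hZ : Z ⊆ Ω) (hu : u ∈ entrances G Ω Z y)
    (hu' : u ∈ entrances G Ω Z y') : HasPathThrough G Ω 2 y y' := by
  obtain ⟨huZ, s, hs⟩ := mem_entrances.mp hu
  obtain ⟨-, s', hs'⟩ := mem_entrances.mp hu'
  have hmono : ∀ {w t}, IsPathThrough G (Ω \ Z) w u t → IsPathThrough G Ω w u t := fun ht =>
    ⟨ht.walk, ht.nodup, fun x hx => (ht.mem x hx).1⟩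
  exact (hmono hs).hasPathThrough_two (hmono hs') (hZ huZ)

end Access

section MinBoundary

variable [Fintype V] {G : SimpleGraph V} {H S T Z Ω : Finset V} {x y y' : V} {ν : ℕ}

/-- Among the sets between `Z` and `H`, the set `Ω` has the fewest boundary vertices, and it is
smallest subject to that. -/
structure IsMinBoundary (G : SimpleGraph V) (H Z Ω : Finset V) : Prop where
  subset_left : Z ⊆ Ω
  subset_right : Ω ⊆ H
  boundary_card_le : ∀ Ω', Z ⊆ Ω' → Ω' ⊆ H → (outerBoundary G Ω).card ≤ (outerBoundary G Ω').card
  card_le : ∀ Ω', Z ⊆ Ω' → Ω' ⊆ H →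
    (outerBoundary G Ω').card ≤ (outerBoundary G Ω).card → Ω.card ≤ Ω'.card

theorem exists_isMinBoundary (G : SimpleGraph V) (h : Z ⊆ H) : ∃ Ω, IsMinBoundary G H Z Ω := by
  classical
  obtain ⟨Ω, hΩ, hmin⟩ := Finset.exists_min_image (Finset.Icc Z H)
    (fun Ω => toLex ((outerBoundary G Ω).card, Ω.card)) ⟨Z, by simpa using h⟩
  rw [Finset.mem_Icc] at hΩ
  have hle : ∀ Ω', Z ⊆ Ω' → Ω' ⊆ H → (outerBoundary G Ω).card < (outerBoundary G Ω').card ∨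
      (outerBoundary G Ω).card = (outerBoundary G Ω').card ∧ Ω.card ≤ Ω'.card :=
    fun Ω' h₁ h₂ => Prod.Lex.toLex_le_toLex.mp (hmin Ω' (Finset.mem_Icc.mpr ⟨h₁, h₂⟩))
  exact ⟨Ω, hΩ.1, hΩ.2, fun Ω' h₁ h₂ => by have := hle Ω' h₁ h₂; lia,
    fun Ω' h₁ h₂ _ => by have := hle Ω' h₁ h₂; lia⟩

theorem le_card_add_card_filter_entrances [DecidableEq V] (hZ : Z ⊆ Ω) (hS : S ⊂ Z)
    (hν : ∀ Ω', Ω'.Nonempty → Ω' ⊆ Ω → ν ≤ (outerBoundary G Ω').card) :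
    ν ≤ S.card + {y ∈ outerBoundary G Ω | ¬ entrances G Ω Z y ⊆ S}.card := by
  set R := reachSet G (Z \ S) (Ω \ S)
  have hZR : Z \ S ⊆ R := subset_reachSet fun z hz => by
    rw [Finset.mem_sdiff] at hz
    exact ⟨hZ hz.1, hz.2⟩
  have hRΩ : R ⊆ Ω := fun v hv => (mem_of_mem_reachSet hv).1
  have hne : (Z \ S).Nonempty := Finset.sdiff_nonempty.mpr hS.2
  refine (hν R (hne.mono hZR) hRΩ).trans ((Finset.card_le_card fun y hy => ?_).trans
    (Finset.card_union_le _ _))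
  rw [Finset.mem_union, Finset.mem_filter, or_iff_not_imp_left]
  intro hyS
  have hyΩ : y ∉ Ω := fun h => notMem_of_mem_outerBoundary_reachSet hy ⟨h, hyS⟩
  refine ⟨mem_outerBoundary_of_reachSet (fun x hx => hx.1) hyΩ hy, fun hsub => ?_⟩
  obtain ⟨z, hz, l, hl, hlU⟩ := exists_walk_of_mem_outerBoundary_reachSet hy
  obtain ⟨u, hu, s, hs, hul, -⟩ := hl.exists_isPathThrough (fun h => hyΩ (hZ h))
    (Finset.mem_sdiff.mp hz).1 fun x hx => (hlU x hx).1
  exact (hlU u hul).2 (hsub (mem_entrances.mpr ⟨hu, s, hs⟩))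

theorem IsMinBoundary.entrances_nonempty (h : IsMinBoundary G H Z Ω)
    (hy : y ∈ outerBoundary G Ω) : (entrances G Ω Z y).Nonempty := by
  have hyΩ : y ∉ Ω := (mem_outerBoundary.mp hy).1
  have hRΩ : reachSet G Z Ω ⊆ Ω := fun v hv => mem_of_mem_reachSet hv
  have hboundary : outerBoundary G (reachSet G Z Ω) ⊆ outerBoundary G Ω := fun w hw =>
    mem_outerBoundary_of_reachSet (fun x hx => hx) (notMem_of_mem_outerBoundary_reachSet hw) hw
  have hR : reachSet G Z Ω = Ω := Finset.eq_of_subset_of_card_le hRΩ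
    (h.card_le _ (subset_reachSet h.subset_left) (hRΩ.trans h.subset_right)
      (Finset.card_le_card hboundary))
  rw [← hR] at hy
  obtain ⟨z, hz, l, hl, hlΩ⟩ := exists_walk_of_mem_outerBoundary_reachSet hy
  obtain ⟨u, hu, s, hs, -, -⟩ := hl.exists_isPathThrough (fun h' => hyΩ (h.subset_left h')) hz hlΩ
  exact ⟨u, mem_entrances.mpr ⟨hu, s, hs⟩⟩

theorem IsMinBoundary.entrances_eq_singleton (h : IsMinBoundary G H Z Ω)
    (hy : y ∈ outerBoundary G Ω) (hx : x ∈ Z)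
    (hmem : ∀ z ∈ Z, ∀ l, IsListWalk G y z (y :: l) → (∀ v ∈ l, v ∈ Ω) → x ∈ l) :
    entrances G Ω Z y = {x} := by
  refine Finset.eq_singleton_iff_nonempty_unique_mem.mpr ⟨h.entrances_nonempty hy, fun u hu => ?_⟩
  obtain ⟨huZ, s, hs⟩ := mem_entrances.mp hu
  have hmem_s : x ∈ s ++ [u] := hmem u huZ _ hs.walk fun v hv => by
    rcases List.mem_append.mp hv with hv | hv
    · exact (hs.mem v hv).1
    · exact List.mem_singleton.mp hv ▸ h.subset_left huZ
  refine (List.mem_singleton.mp ((List.mem_append.mp hmem_s).resolve_left fun hxs => ?_)).symm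
  exact (hs.mem x hxs).2 hx

theorem IsMinBoundary.exists_walk_notMem [DecidableEq V] (h : IsMinBoundary G H Z Ω)
    (hy : y ∈ outerBoundary G Ω) (hy' : y' ∈ outerBoundary G Ω) (hyy' : y ≠ y') (hx : x ∉ Z) :
    ∃ j ∈ ({y, y'} : Finset V), ∃ z ∈ Z, ∃ l, IsListWalk G j z (j :: l) ∧
      ∀ v ∈ l, v ∈ Ω ∧ v ≠ x := by
  by_contra! hcon
  set R := reachSet G Z {v | v ∈ Ω ∧ v ≠ x}
  have hZR : Z ⊆ R := subset_reachSet fun z hz =>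
    ⟨h.subset_left hz, ne_of_mem_of_not_mem hz hx⟩
  have hRΩ : R ⊆ Ω := fun v hv => (mem_of_mem_reachSet hv).1
  have hsub : outerBoundary G R ⊆ insert x (outerBoundary G Ω \ {y, y'}) := fun w hw => by
    rw [Finset.mem_insert, Finset.mem_sdiff, or_iff_not_imp_left]
    intro hwx
    refine ⟨mem_outerBoundary_of_reachSet (fun v hv => hv.1)
      (fun hwΩ => notMem_of_mem_outerBoundary_reachSet hw ⟨hwΩ, hwx⟩) hw, fun hwy => ?_⟩
    obtain ⟨z, hz, l, hl, hlU⟩ := exists_walk_of_mem_outerBoundary_reachSet hw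
    obtain ⟨v, hv, hvx⟩ := hcon w hwy z hz l hl
    exact (hlU v hv).2 (hvx (hlU v hv).1)
  have hpair : {y, y'} ⊆ outerBoundary G Ω :=
    Finset.insert_subset hy (Finset.singleton_subset_iff.mpr hy')
  have hmin := h.boundary_card_le R hZR (hRΩ.trans h.subset_right)
  have hcard := (Finset.card_le_card hsub).trans (Finset.card_insert_le _ _)
  have hcard_pair := Finset.card_le_card hpair
  rw [Finset.card_sdiff_of_subset hpair] at hcard
  rw [Finset.card_pair hyy'] at hcard hcard_pair
  lia

theorem IsMinBoundary.exists_walk_forall_ne [DecidableEq V] (h : IsMinBoundary G H Z Ω)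
    (hy : y ∈ outerBoundary G Ω) (hy' : y' ∈ outerBoundary G Ω) (hyy' : y ≠ y')
    (hne : ¬ ∃ u, entrances G Ω Z y = {u} ∧ entrances G Ω Z y' = {u}) (x : V) :
    ∃ j ∈ ({y, y'} : Finset V), ∃ z ∈ Z, ∃ l, IsListWalk G j z (j :: l) ∧
      ∀ v ∈ l, v ∈ Ω ∧ v ≠ x := by
  by_cases hx : x ∈ Z
  · by_contra! hcon
    have hmem : ∀ j ∈ ({y, y'} : Finset V), ∀ z ∈ Z, ∀ l, IsListWalk G j z (j :: l) →
        (∀ v ∈ l, v ∈ Ω) → x ∈ l := fun j hj z hz l hl hlΩ => by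
      obtain ⟨v, hv, hvx⟩ := hcon j hj z hz l hl
      exact hvx (hlΩ v hv) ▸ hv
    exact hne ⟨x, h.entrances_eq_singleton hy hx (hmem y (by simp)),
      h.entrances_eq_singleton hy' hx (hmem y' (by simp))⟩
  · exact h.exists_walk_notMem hy hy' hyy' hx

theorem IsMinBoundary.exists_walk (h : IsMinBoundary G H Z Ω) (hy : y ∈ outerBoundary G Ω) :
    ∃ z ∈ Z, ∃ l, IsListWalk G y z (y :: l) ∧ ∀ v ∈ l, v ∈ Ω := by
  obtain ⟨u, hu⟩ := h.entrances_nonempty hy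
  obtain ⟨huZ, s, hs⟩ := mem_entrances.mp hu
  refine ⟨u, huZ, _, hs.walk, fun v hv => ?_⟩
  rcases List.mem_append.mp hv with hv | hv
  · exact (hs.mem v hv).1
  · exact List.mem_singleton.mp hv ▸ h.subset_left huZ

theorem IsMinBoundary.two_le_card_of_separating [DecidableEq V] (h : IsMinBoundary G H Z Ω)
    (hy : y ∈ outerBoundary G Ω) (hy' : y' ∈ outerBoundary G Ω) (hyy' : y ≠ y')
    (hne : ¬ ∃ u, entrances G Ω Z y = {u} ∧ entrances G Ω Z y' = {u})
    (hT : ∀ z ∈ Z, ∀ j ∈ ({y, y'} : Finset V),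
      ¬ ReachableIn G ({v | v ∈ Ω ∨ v ∈ ({y, y'} : Finset V)} \ T) z j) : 2 ≤ T.card := by
  by_contra! hcard
  have hmeet : ∀ j ∈ ({y, y'} : Finset V), ∀ z ∈ Z, ∀ l, IsListWalk G j z (j :: l) →
      (∀ v ∈ l, v ∈ Ω) → ∃ x ∈ j :: l, x ∈ T := fun j hj z hz l hl hlΩ => by
    by_contra! hmiss
    refine hT z hz j hj ⟨_, hl.reverse, fun v hv => ?_⟩
    rw [List.mem_reverse] at hv
    refine ⟨?_, hmiss v hv⟩
    rcases List.mem_cons.mp hv with rfl | hvl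
    exacts [Or.inr hj, Or.inl (hlΩ v hvl)]
  have hyΩ : y ∉ Ω := (mem_outerBoundary.mp hy).1
  have hyΩ' : y' ∉ Ω := (mem_outerBoundary.mp hy').1
  obtain ⟨z, hz, l, hl, hlΩ⟩ := h.exists_walk hy
  obtain ⟨z', hz', l', hl', hlΩ'⟩ := h.exists_walk hy'
  obtain ⟨x, hxl, hxT⟩ := hmeet y (by simp) z hz l hl hlΩ
  obtain ⟨x', hxl', hxT'⟩ := hmeet y' (by simp) z' hz' l' hl' hlΩ'
  have hone : ∀ v ∈ T, v = x := fun v hv => Finset.card_le_one.mp (by lia) v hv x hxT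
  obtain rfl := hone x' hxT'
  obtain ⟨j, hj, w, hw, m, hm, hmx⟩ := h.exists_walk_forall_ne hy hy' hyy' hne x'
  obtain ⟨v, hv, hvT⟩ := hmeet j hj w hw m hm fun v hv => (hmx v hv).1
  obtain rfl := hone v hvT
  have hvj : v = j := (List.mem_cons.mp hv).resolve_right fun hvm => (hmx v hvm).2 rfl
  grind

theorem IsMinBoundary.exists_disjoint_access (h : IsMinBoundary G H Z Ω)
    (hy : y ∈ outerBoundary G Ω) (hy' : y' ∈ outerBoundary G Ω) (hyy' : y ≠ y')
    (hne : ¬ ∃ u, entrances G Ω Z y = {u} ∧ entrances G Ω Z y' = {u}) :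
    ∃ a ∈ Z, ∃ b ∈ Z, a ≠ b ∧ ∃ s s', IsPathThrough G (Ω \ Z) y a s ∧
      IsPathThrough G (Ω \ Z) y' b s' ∧ s.Disjoint s' := by
  classical
  have hyΩ : y ∉ Ω := (mem_outerBoundary.mp hy).1
  have hyΩ' : y' ∉ Ω := (mem_outerBoundary.mp hy').1
  obtain ⟨f, ⟨hf, hdisj⟩, hfU⟩ := exists_full_linkage_in (G := G) (A := Z) (B := {y, y'})
    (U := {v | v ∈ Ω ∨ v ∈ ({y, y'} : Finset V)}) (fun b hb => Or.inr hb) fun T hT =>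
      (Finset.card_pair hyy').le.trans (h.two_le_card_of_separating hy hy' hyy' hne hT)
  have haccess : ∀ j ∈ ({y, y'} : Finset V),
      ∃ a ∈ Z, ∃ s, IsPathThrough G (Ω \ Z) j a s ∧ a ∈ f j ∧ s ⊆ f j := fun j hj => by
    obtain ⟨a, ha⟩ := hf j hj
    have hrev := ha.walk.reverse
    obtain ⟨l, hl⟩ := hrev.exists_eq_cons
    have hmem : ∀ x, x ∈ f j ↔ x ∈ j :: l := fun x => by rw [← hl, List.mem_reverse]
    have hjl : j ∉ l := (List.nodup_cons.mp (hl ▸ List.nodup_reverse.mpr ha.nodup)).1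
    obtain ⟨u, hu, s, hs, hul, hsl⟩ := (hl ▸ hrev).exists_isPathThrough (Ω := Ω) (by
      rcases Finset.mem_insert.mp hj with rfl | hj
      exacts [fun h' => hyΩ (h.subset_left h'),
        fun h' => hyΩ' (h.subset_left (Finset.mem_singleton.mp hj ▸ h'))]) ha.start_mem
      fun x hx => (hfU j hj x ((hmem x).mpr (by simp [hx]))).resolve_right fun hxB =>
        hjl (ha.eq_end x ((hmem x).mpr (by simp [hx])) hxB ▸ hx)
    exact ⟨u, hu, s, hs, (hmem u).mpr (by simp [hul]), fun x hx =>
      (hmem x).mpr (List.mem_cons_of_mem j (hsl hx))⟩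
  obtain ⟨a, ha, s, hs, haf, hsf⟩ := haccess y (by simp)
  obtain ⟨b, hb, s', hs', hbf, hsf'⟩ := haccess y' (by simp)
  have hd := hdisj (by simp : y ∈ _) (by simp : y' ∈ _) hyy'
  exact ⟨a, ha, b, hb, fun hab => hd haf (hab ▸ hbf), s, s', hs, hs',
    fun x hx hx' => hd (hsf hx) (hsf' hx')⟩

end MinBoundary

/-! ### Projecting a boundary to the cycle -/

section ExtendToEar

variable {G : SimpleGraph V} {B Ω : Finset V} {C l l' : List V} {a a' y y' : V} {n : ℕ}

theorem HasPathThrough.hasEar_of_isPathBetween [DecidableEq V] (h : HasPathThrough G Ω n y y')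
    (hl : IsPathBetween G C.toFinset B a y l) (hl' : IsPathBetween G C.toFinset B a' y' l')
    (hll' : l.Disjoint l') (hlΩ : ∀ x ∈ l, x ∉ Ω) (hlΩ' : ∀ x ∈ l', x ∉ Ω)
    (hΩC : ∀ x ∈ Ω, x ∉ C) : HasEar G Set.univ C n a a' := by
  obtain ⟨s, hs, hn⟩ := h
  have haa' : a ≠ a' := fun h => hll' hl.walk.head_mem (h ▸ hl'.walk.head_mem)
  obtain ⟨l, rfl⟩ := hl.walk.exists_eq_concat
  obtain ⟨l', rfl⟩ := hl'.walk.exists_eq_concat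
  have hW : IsListWalk G a a' ((l ++ y :: s) ++ y' :: l'.reverse) :=
    .append_cons (by simpa using IsListWalk.append_cons hl.walk hs.walk)
      (by simpa using hl'.walk.reverse)
  have hnd : ((l ++ y :: s) ++ y' :: l'.reverse).Nodup := by
    have := hl.nodup
    have := hl'.nodup
    have := hs.nodup
    have := hs.mem
    grind [List.nodup_append, List.Disjoint]
  have hC : ∀ x ∈ (l ++ y :: s) ++ y' :: l'.reverse, x ∈ C → x = a ∨ x = a' := by
    have h₁ := hl.eq_start
    have h₂ := hl'.eq_start
    have h₃ := hs.mem
    simp only [List.mem_toFinset, List.mem_append, List.mem_cons, List.mem_reverse,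
      Finset.mem_coe] at h₁ h₂ h₃ ⊢
    grind
  obtain ⟨m, hm⟩ := hW.exists_eq_cons_concat haa'
  have hlen := congrArg List.length hm
  rw [hm] at hW hnd hC
  simp only [List.length_append, List.length_cons, List.length_reverse, List.length_nil] at hlen
  exact ⟨m, ⟨hW, by grind, fun x hx => ⟨fun hxC => by grind, trivial⟩⟩, by lia⟩

end ExtendToEar

section Feet

variable [Fintype V] {G : SimpleGraph V} {A H T Z Ω : Finset V} {C : List V}

theorem IsMinBoundary.card_outerBoundary_le_of_separating (h : IsMinBoundary G H Z Ω)
    (hA : ∀ v, v ∉ A → v ∈ H)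
    (hT : ∀ a ∈ A, ∀ b ∈ outerBoundary G Ω, ¬ ReachableIn G ({v | v ∉ Ω} \ T) a b) :
    (outerBoundary G Ω).card ≤ T.card := by
  classical
  set R := reachSet G (outerBoundary G Ω) ({v | v ∉ Ω} \ T)
  have hRH : Ω ∪ R ⊆ H := Finset.union_subset h.subset_right fun v hv => hA v fun hvA => by
    obtain ⟨b, hb, l, hl, hlU⟩ := mem_reachSet.mp hv
    exact hT v hvA b hb ⟨_, hl.reverse, by simpa using hlU⟩
  refine (h.boundary_card_le _ (h.subset_left.trans Finset.subset_union_left) hRH).trans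
    (Finset.card_le_card fun w hw => ?_)
  obtain ⟨hwR, x, hx, hwx⟩ := mem_outerBoundary.mp hw
  rw [Finset.mem_union, not_or] at hwR
  by_contra hwT
  have hwU : w ∈ ({v | v ∉ Ω} \ T : Set V) := ⟨hwR.1, hwT⟩
  rcases Finset.mem_union.mp hx with hx | hx
  · exact hwR.2 (mem_reachSet.mpr
      ⟨w, mem_outerBoundary.mpr ⟨hwR.1, x, hx, hwx⟩, reachableIn_refl G hwU⟩)
  · obtain ⟨b, hb, hbx⟩ := mem_reachSet.mp hx
    exact hwR.2 (mem_reachSet.mpr ⟨b, hb, hbx.concat hwx.symm hwU⟩)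

theorem IsMinBoundary.exists_feet (h : IsMinBoundary G H Z Ω) (hH : ∀ v, v ∈ H ↔ v ∉ C) :
    ∃ φ : V → V, Set.InjOn φ (outerBoundary G Ω) ∧ (∀ y ∈ outerBoundary G Ω, φ y ∈ C) ∧
      ∀ y ∈ outerBoundary G Ω, ∀ y' ∈ outerBoundary G Ω, y ≠ y' → ∀ n,
        HasPathThrough G Ω n y y' → HasEar G Set.univ C n (φ y) (φ y') := by
  classical
  obtain ⟨f, ⟨hf, hdisj⟩, hfΩ⟩ := exists_full_linkage_in (G := G) (A := C.toFinset)
    (B := outerBoundary G Ω) (U := {v | v ∉ Ω}) (fun b hb => (mem_outerBoundary.mp hb).1)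
    fun T hT => h.card_outerBoundary_le_of_separating (by simp [hH]) hT
  choose! φ hφ using hf
  refine ⟨φ, fun y hy y' hy' heq => ?_, fun y hy => by simpa using (hφ y hy).start_mem,
    fun y hy y' hy' hyy' n hn => ?_⟩
  · by_contra hyy'
    exact hdisj hy hy' hyy' (hφ y hy).walk.head_mem (heq ▸ (hφ y' hy').walk.head_mem)
  · exact hn.hasEar_of_isPathBetween (hφ y hy) (hφ y' hy') (hdisj hy hy' hyy') (hfΩ y hy)
      (hfΩ y' hy') fun x hx => (hH x).mp (h.subset_right hx)

end Feet

section Counting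

variable [DecidableEq V] {N Z : Finset V} {cls : V → V} {d ν : ℕ}

theorem card_image_eq_card_inter_add (hcls : ∀ y ∈ N, cls y ∈ Z ∨ cls y = y) :
    (N.image cls).card = (N.image cls ∩ Z).card + {y ∈ N | cls y ∉ Z}.card := by
  rw [← Finset.card_inter_add_card_sdiff (N.image cls) Z]
  congr 2
  ext c
  simp only [Finset.mem_sdiff, Finset.mem_image, Finset.mem_filter]
  grind

theorem le_card_image_or_subset_image (hcls : ∀ y ∈ N, cls y ∈ Z ∨ cls y = y)
    (hcut : ∀ S ⊂ Z, ν ≤ S.card + {y ∈ N | cls y ∉ S}.card) :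
    ν ≤ (N.image cls).card ∨ Z ⊆ N.image cls := by
  by_cases hZ : Z ⊆ N.image cls
  · exact Or.inr hZ
  · left
    rw [card_image_eq_card_inter_add hcls]
    refine (hcut (N.image cls ∩ Z) ⟨Finset.inter_subset_right, fun h =>
      hZ (h.trans Finset.inter_subset_left)⟩).trans
      (Nat.add_le_add_left (Finset.card_le_card fun y hy => ?_) _)
    simp only [Finset.mem_filter, Finset.mem_inter, Finset.mem_image] at hy ⊢
    exact ⟨hy.1, fun hyZ => hy.2 ⟨⟨y, hy.1, rfl⟩, hyZ⟩⟩

theorem card_mul_add_card_image_le (hcls : ∀ y ∈ N, cls y ∈ Z ∨ cls y = y)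
    (hcut : ∀ S ⊂ Z, ν ≤ S.card + {y ∈ N | cls y ∉ S}.card) (hZ : Z ⊆ N.image cls) :
    Z.card * (ν - (N.image cls).card) + (N.image cls).card ≤ N.card := by
  have hK := card_image_eq_card_inter_add hcls
  rw [Finset.inter_eq_right.mpr hZ] at hK
  -- The cut `Z \ {z}` shows that every fibre over `Z` exceeds the defect `ν - |cls(N)|`.
  have hfiber : ∀ z ∈ Z, ν - (N.image cls).card + 1 ≤
      {y ∈ {y ∈ N | cls y ∈ Z} | cls y = z}.card := fun z hz => by
    have hle := hcut (Z.erase z) (Finset.erase_ssubset hz)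
    have hsub : {y ∈ N | cls y ∉ Z.erase z} ⊆
        {y ∈ N | cls y ∉ Z} ∪ {y ∈ {y ∈ N | cls y ∈ Z} | cls y = z} := fun y hy => by
      simp only [Finset.mem_filter, Finset.mem_union, Finset.mem_erase] at hy ⊢
      tauto
    have hcard := (Finset.card_le_card hsub).trans (Finset.card_union_le _ _)
    have hpos : 0 < {y ∈ {y ∈ N | cls y ∈ Z} | cls y = z}.card := by
      obtain ⟨y, hy, rfl⟩ := Finset.mem_image.mp (hZ hz)
      exact Finset.card_pos.mpr ⟨y, by simp [hy, hz]⟩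
    rw [Finset.card_erase_of_mem hz] at hle
    have := Finset.card_pos.mpr ⟨z, hz⟩
    lia
  have hsum := Finset.card_nsmul_le_sum Z _ _ hfiber
  rw [← Finset.card_eq_sum_card_fiberwise (by simp [Set.MapsTo]), smul_eq_mul,
    mul_add_one] at hsum
  have hN := Finset.card_filter_add_card_filter_not (s := N) fun y => cls y ∈ Z
  lia

theorem mul_le_two_mul_card_add_mul_card_image (hcls : ∀ y ∈ N, cls y ∈ Z ∨ cls y = y)
    (hcut : ∀ S ⊂ Z, ν ≤ S.card + {y ∈ N | cls y ∉ S}.card) (hd : d + 1 ≤ Z.card) :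
    ν * (d + 2) ≤ 2 * N.card + d * (N.image cls).card := by
  have hKN : (N.image cls).card ≤ N.card := Finset.card_image_le
  rcases le_total ν (N.image cls).card with hν | hν
  · nlinarith
  · rcases le_card_image_or_subset_image hcls hcut with hν' | hZ
    · nlinarith
    · obtain ⟨t, rfl⟩ := Nat.exists_eq_add_of_le hν
      have hN := card_mul_add_card_image_le hcls hcut hZ
      rw [Nat.add_sub_cancel_left] at hN
      nlinarith [Nat.mul_le_mul_right t hd]

end Counting

section LinkedSetOutside

variable [Fintype V] {G : SimpleGraph V} {H Z Ω : Finset V} {C : List V} {d ν : ℕ} {y y' : V}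

theorem IsMinBoundary.entrances_eq_singleton_or_hasPathThrough (h : IsMinBoundary G H Z Ω)
    (hZ : (Z : Set V).Pairwise (HasPathIn G Z (d + 1))) (hy : y ∈ outerBoundary G Ω)
    (hy' : y' ∈ outerBoundary G Ω) (hyy' : y ≠ y') :
    (∃ u, entrances G Ω Z y = {u} ∧ entrances G Ω Z y' = {u}) ∨
      HasPathThrough G Ω (d + 2) y y' := by
  refine or_iff_not_imp_left.mpr fun hne => ?_
  obtain ⟨a, ha, b, hb, hab, s, s', hs, hs', hdisj⟩ := h.exists_disjoint_access hy hy' hyy' hne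
  exact hs.hasPathThrough_of_disjoint hs' h.subset_left hdisj (hZ ha hb hab)

/-- The class of a boundary vertex is its entrance to `Z` when this is unique, and the vertex itself
otherwise; vertices of different classes are joined by a path crossing `Z`. -/
theorem exists_entranceClass [DecidableEq V] (hZ : Z ⊆ Ω)
    (hν : ∀ Ω', Ω'.Nonempty → Ω' ⊆ Ω → ν ≤ (outerBoundary G Ω').card) :
    ∃ cls : V → V, (∀ y u, entrances G Ω Z y = {u} → cls y = u) ∧
      (∀ y ∈ outerBoundary G Ω, cls y ∈ Z ∨ cls y = y) ∧
      ∀ S ⊂ Z, ν ≤ S.card + {y ∈ outerBoundary G Ω | cls y ∉ S}.card := by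
  have hcls : ∀ y, ∃ c, entrances G Ω Z y = {c} ∨ c = y ∧ ∀ u, entrances G Ω Z y ≠ {u} :=
    fun y => by by_cases h : ∃ u, entrances G Ω Z y = {u} <;> grind
  choose cls hcls using hcls
  refine ⟨cls, fun y u hu => ?_, fun y _ => ?_, fun S hS => ?_⟩
  · rcases hcls y with h | ⟨-, h⟩
    exacts [Finset.singleton_injective (h.symm.trans hu), absurd hu (h u)]
  · exact (hcls y).imp (fun h => (mem_entrances.mp (h ▸ Finset.mem_singleton_self _)).1) And.left
  · refine (le_card_add_card_filter_entrances hZ hS hν).trans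
      (Nat.add_le_add_left (Finset.card_le_card fun y hy => ?_) _)
    rw [Finset.mem_filter] at hy ⊢
    refine ⟨hy.1, fun hyS => ?_⟩
    rcases hcls y with h | ⟨h, -⟩
    · exact hy.2 (h ▸ Finset.singleton_subset_iff.mpr hyS)
    · exact (mem_outerBoundary.mp hy.1).1 (hZ (hS.1 (h ▸ hyS)))

theorem IsLongestCycleIn.mul_le_length_of_hasLinkedSet (hC : IsLongestCycleIn G Set.univ C)
    (hH : ∀ v, v ∈ H ↔ v ∉ C)
    (hν : ∀ Ω, Ω.Nonempty → Ω ⊆ H → ν ≤ (outerBoundary G Ω).card) (hν₂ : 2 ≤ ν)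
    (hd : HasLinkedSet G H d) : ν * (d + 2) ≤ C.length := by
  classical
  obtain ⟨Z, hZH, hZd, hZ⟩ := hd
  obtain ⟨Ω, hΩ⟩ := exists_isMinBoundary G hZH
  obtain ⟨φ, hφ, hφC, hear⟩ := hΩ.exists_feet hH
  have hpath := fun y hy y' hy' =>
    hΩ.entrances_eq_singleton_or_hasPathThrough (y := y) (y' := y') hZ hy hy'
  have hpath₂ : ∀ y ∈ outerBoundary G Ω, ∀ y' ∈ outerBoundary G Ω, y ≠ y' →
      HasPathThrough G Ω 2 y y' := fun y hy y' hy' hyy' => by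
    rcases hpath y hy y' hy' hyy' with ⟨u, hu, hu'⟩ | h
    · exact hasPathThrough_two_of_mem_entrances (u := u) hΩ.subset_left (by simp [hu])
        (by simp [hu'])
    · exact h.mono (by lia)
  have hear₂ := fun y hy y' hy' hyy' => hear y hy y' hy' hyy' 2 (hpath₂ y hy y' hy' hyy')
  obtain ⟨cls, hcls_eq, hclsZ, hcut⟩ := exists_entranceClass (ν := ν) hΩ.subset_left
    fun Ω' hne hsub => hν Ω' hne (hsub.trans hΩ.subset_right)
  have hcount := mul_le_two_mul_card_add_mul_card_image hclsZ hcut hZd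
  refine hcount.trans ?_
  rcases Nat.eq_zero_or_pos d with rfl | hd
  · have := hC.sum_le_length hφ hφC (fun _ => 2) (by lia) fun y hy y' hy' hyy' =>
      ⟨2, hear₂ y hy y' hy' hyy', le_rfl⟩
    simpa [mul_comm] using this
  · have hcard : 2 ≤ ((outerBoundary G Ω).image cls).card := by
      rcases le_card_image_or_subset_image hclsZ hcut with h | h
      · exact hν₂.trans h
      · exact (by lia : 2 ≤ Z.card).trans (Finset.card_le_card h)
    have hear_d : ∀ y ∈ outerBoundary G Ω, ∀ y' ∈ outerBoundary G Ω, y ≠ y' → cls y ≠ cls y' →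
        HasEar G Set.univ C (d + 2) (φ y) (φ y') := fun y hy y' hy' hyy' hne =>
      hear y hy y' hy' hyy' _ <| (hpath y hy y' hy' hyy').resolve_left fun ⟨u, hu, hu'⟩ =>
        hne ((hcls_eq y u hu).trans (hcls_eq y' u hu').symm)
    exact hC.card_add_mul_card_image_le_length hφ hφC cls hcard hear₂ hear_d

end LinkedSetOutside

section Excess

theorem sum_range_getD_le_sum {L : List ℤ} (h : ∀ x ∈ L, 0 ≤ x) (j : ℕ) :
    ∑ i ∈ Finset.range j, L.getD i 0 ≤ L.sum := by
  induction L generalizing j with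
  | nil => simp
  | cons a L ih =>
    rw [List.forall_mem_cons] at h
    rcases j with _ | j
    · simpa using add_nonneg h.1 (List.sum_nonneg h.2)
    · rw [Finset.sum_range_succ', List.sum_cons]
      simp only [List.getD_cons_succ, List.getD_cons_zero]
      linarith [ih h.2 j]

theorem mul_le_sum_map_add_sum_map {A B : List V} {f : V → ℤ} {j : ℕ} {e : ℤ}
    (hA : ∀ x ∈ A, 0 ≤ f x) (hB : ∀ x ∈ B, 0 ≤ f x) (hjA : j ≤ A.length) (hjB : j ≤ B.length)
    (h : ∀ A₁ p A₂ B₁ r B₂, A = A₁ ++ p :: A₂ → B = B₁ ++ r :: B₂ →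
      A₁.length + B₁.length + 1 = j → e ≤ f p + f r) :
    j * e ≤ (A.map f).sum + (B.map f).sum := by
  have hpair : ∀ i ∈ Finset.range j,
      e ≤ (A.map f).getD i 0 + (B.map f).getD (j - 1 - i) 0 := fun i hi => by
    rw [Finset.mem_range] at hi
    have hiA : i < A.length := by lia
    have hiB : j - 1 - i < B.length := by lia
    rw [List.getD_eq_getElem _ _ (by simpa using hiA),
      List.getD_eq_getElem _ _ (by simpa using hiB), List.getElem_map, List.getElem_map]
    exact h (A.take i) A[i] (A.drop (i + 1)) (B.take (j - 1 - i)) B[j - 1 - i]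
      (B.drop (j - 1 - i + 1)) (by simp) (by simp) (by simp only [List.length_take]; lia)
  calc (j : ℤ) * e
      = ∑ _i ∈ Finset.range j, e := by simp
    _ ≤ ∑ i ∈ Finset.range j, ((A.map f).getD i 0 + (B.map f).getD (j - 1 - i) 0) :=
        Finset.sum_le_sum hpair
    _ = ∑ i ∈ Finset.range j, (A.map f).getD i 0 + ∑ i ∈ Finset.range j, (B.map f).getD i 0 := by
        rw [Finset.sum_add_distrib, Finset.sum_range_reflect (fun i => (B.map f).getD i 0)]
    _ ≤ (A.map f).sum + (B.map f).sum :=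
        add_le_add (sum_range_getD_le_sum (by simpa using hA) j)
          (sum_range_getD_le_sum (by simpa using hB) j)

end Excess

section ConsecutiveEntrances

variable {G : SimpleGraph V} {R U : Set V} {Q B s s' : List V} {a b x y y' : V}

theorem IsListCycle.exists_perm_formPerm [DecidableEq V] (h : IsListCycle G Q) (ha : a ∈ Q) :
    ∃ B, IsListCycle G (a :: Q.formPerm a :: B) ∧ (a :: Q.formPerm a :: B).Perm Q := by
  obtain ⟨l, m, rfl⟩ := List.append_of_mem ha
  have hform : (a :: m ++ l).formPerm = (l ++ a :: m).formPerm := by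
    rw [← List.rotate_append_length_eq l (a :: m)]
    exact List.formPerm_rotate _ h.nodup _
  have hcyc : IsListCycle G (a :: (m ++ l)) := h.rotate
  obtain ⟨b, B, hB⟩ : ∃ b B, m ++ l = b :: B := List.exists_cons_of_ne_nil fun hnil => by
    simpa [hnil] using hcyc.three_le
  rw [hB] at hcyc
  rw [← hform, List.cons_append, hB, List.formPerm_apply_head _ _ _ hcyc.nodup]
  exact ⟨B, hcyc, hB ▸ (List.perm_append_comm (l₁ := a :: m) (l₂ := l))⟩

theorem IsPathThrough.exists_of_mem (h : IsPathThrough G U y a s) (hx : x ∈ s) :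
    ∃ t, IsPathThrough G U a x t := by
  obtain ⟨t, t', rfl⟩ := List.append_of_mem hx
  have hwalk : IsListWalk G y a (y :: t ++ x :: (t' ++ [a])) := by simpa using h.walk
  refine ⟨t'.reverse, by simpa using hwalk.of_append_cons.2.reverse,
    List.nodup_reverse.mpr h.nodup.of_append_right.of_cons, fun v hv => h.mem v ?_⟩
  rw [List.mem_reverse] at hv
  simp [hv]

theorem IsLongestCycleIn.disjoint_of_isPathThrough (hQ : IsLongestCycleIn G R Q)
    (hcyc : IsListCycle G (a :: b :: B)) (hperm : (a :: b :: B).Perm Q)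
    (h : IsPathThrough G {v | v ∉ Q ∧ v ∈ R} y a s)
    (h' : IsPathThrough G {v | v ∉ Q ∧ v ∈ R} y' b s') : s.Disjoint s' := fun x hx hx' => by
  obtain ⟨t, ht⟩ := h.exists_of_mem hx
  obtain ⟨t', ht'⟩ := h'.exists_of_mem hx'
  have := hQ.ear_length_le_arc (A := []) hcyc hperm (ht.hasPathThrough_two ht' (h.mem x hx))
  simp at this

theorem card_add_card_le_length_of_formPerm_notMem [DecidableEq V] {E E' : Finset V}
    (hQ : Q.Nodup) (hE : E ⊆ Q.toFinset) (hE' : E' ⊆ Q.toFinset)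
    (h : ∀ a ∈ E, Q.formPerm a ∉ E') : E.card + E'.card ≤ Q.length := by
  rw [← List.toFinset_card_of_nodup hQ,
    ← Finset.card_image_of_injective E Q.formPerm.injective, ← Finset.card_union_of_disjoint]
  · refine Finset.card_le_card (Finset.union_subset (fun v hv => ?_) hE')
    obtain ⟨a, ha, rfl⟩ := Finset.mem_image.mp hv
    simpa using hE ha
  · exact Finset.disjoint_left.mpr fun v hv => by
      obtain ⟨a, ha, rfl⟩ := Finset.mem_image.mp hv
      exact h a ha

end ConsecutiveEntrances

section EntrancesToCycle

variable [Fintype V] [DecidableEq V] {G : SimpleGraph V} {H Ω : Finset V} {Q : List V} {y y' : V}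

theorem IsMinBoundary.hasPathThrough_of_formPerm (hΩ : IsMinBoundary G H Q.toFinset Ω)
    (hQ : IsLongestCycleIn G H Q) {a : V} (ha : a ∈ entrances G Ω Q.toFinset y)
    (ha' : Q.formPerm a ∈ entrances G Ω Q.toFinset y') :
    HasPathThrough G Ω (Q.length + 1) y y' := by
  have hmono : ∀ {w v s}, IsPathThrough G (Ω \ Q.toFinset) w v s →
      IsPathThrough G {v | v ∉ Q ∧ v ∈ (H : Set V)} w v s := fun hs =>
    ⟨hs.walk, hs.nodup, fun x hx =>
      ⟨fun hxQ => (hs.mem x hx).2 (List.mem_toFinset.mpr hxQ), hΩ.subset_right (hs.mem x hx).1⟩⟩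
  obtain ⟨haQ, s, hs⟩ := mem_entrances.mp ha
  obtain ⟨-, s', hs'⟩ := mem_entrances.mp ha'
  obtain ⟨B, hcyc, hperm⟩ := hQ.cycle.exists_perm_formPerm (List.mem_toFinset.mp haQ)
  have hcyc' : IsListCycle G (a :: ([] ++ Q.formPerm a :: B)) := hcyc
  have hpath := hcyc'.hasPathIn_arc'
  rw [List.nil_append, List.toFinset_eq_of_perm _ _ hperm] at hpath
  exact hs.hasPathThrough_of_disjoint hs' hΩ.subset_left
    (hQ.disjoint_of_isPathThrough hcyc hperm (hmono hs) (hmono hs'))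
    (hpath.mono subset_rfl hperm.length_eq.ge)

theorem IsMinBoundary.exists_hasPathThrough_card_entrances
    (hΩ : IsMinBoundary G H Q.toFinset Ω) (hQ : IsLongestCycleIn G H Q)
    (hy : y ∈ outerBoundary G Ω) (hy' : y' ∈ outerBoundary G Ω) (hyy' : y ≠ y') :
    ∃ n, HasPathThrough G Ω n y y' ∧
      ((entrances G Ω Q.toFinset y).card + 1) + ((entrances G Ω Q.toFinset y').card + 1) ≤
        2 * n := by
  have hsub : ∀ z, entrances G Ω Q.toFinset z ⊆ Q.toFinset := fun z u hu => (mem_entrances.mp hu).1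
  have hcard := List.toFinset_card_of_nodup hQ.cycle.nodup
  by_cases hsingle : ∃ u, entrances G Ω Q.toFinset y = {u} ∧ entrances G Ω Q.toFinset y' = {u}
  · obtain ⟨u, hu, hu'⟩ := hsingle
    exact ⟨2, hasPathThrough_two_of_mem_entrances (u := u) hΩ.subset_left (by simp [hu])
      (by simp [hu']), by simp [hu, hu']⟩
  by_cases hnext : ∃ a ∈ entrances G Ω Q.toFinset y, Q.formPerm a ∈ entrances G Ω Q.toFinset y'
  · obtain ⟨a, ha, ha'⟩ := hnext
    have := Finset.card_le_card (hsub y)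
    have := Finset.card_le_card (hsub y')
    exact ⟨_, hΩ.hasPathThrough_of_formPerm hQ ha ha', by lia⟩
  · push Not at hnext
    have := card_add_card_le_length_of_formPerm_notMem hQ.cycle.nodup (hsub y) (hsub y') hnext
    obtain ⟨a, ha, b, hb, hab, s, s', hs, hs', hss'⟩ :=
      hΩ.exists_disjoint_access hy hy' hyy' hsingle
    rw [List.mem_toFinset] at ha hb
    exact ⟨_, hs.hasPathThrough_of_disjoint hs' hΩ.subset_left hss'
      (hQ.cycle.hasPathIn_of_two_mul_le (t := Q.length / 2) (by lia) ha hb hab), by lia⟩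

end EntrancesToCycle

section Entrants

variable [Fintype V] {G : SimpleGraph V} {Z Ω : Finset V} {u x y : V}

open Classical in
/-- The boundary vertices of `Ω` having `u` among their entrances; transposes `entrances`. -/
noncomputable def entrants (G : SimpleGraph V) (Ω Z : Finset V) (u : V) : Finset V :=
  {y ∈ outerBoundary G Ω | u ∈ entrances G Ω Z y}

theorem mem_entrants :
    y ∈ entrants G Ω Z u ↔ y ∈ outerBoundary G Ω ∧ u ∈ entrances G Ω Z y := by
  simp [entrants]

theorem sum_card_entrances (G : SimpleGraph V) (Ω Z : Finset V) :
    ∑ y ∈ outerBoundary G Ω, (entrances G Ω Z y).card = ∑ u ∈ Z, (entrants G Ω Z u).card := by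
  classical
  convert Finset.sum_card_bipartiteAbove_eq_sum_card_bipartiteBelow
    (fun y u => u ∈ entrances G Ω Z y) (s := outerBoundary G Ω) (t := Z) using 3 with y _ u _
  · ext v
    simp only [Finset.mem_bipartiteAbove, mem_entrances]
    tauto
  · simp [entrants, Finset.bipartiteBelow]

theorem degIn_univ_le_of_mem (hZ : Z ⊆ Ω) (hu : u ∈ Z) :
    degIn G Finset.univ u ≤ degIn G Ω u + (entrants G Ω Z u).card := by
  refine degIn_le_degIn_add_card fun y _ huy => or_iff_not_imp_left.mpr fun hy =>
    mem_entrants.mpr ⟨mem_outerBoundary.mpr ⟨hy, u, hZ hu, huy.symm⟩,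
      mem_entrances.mpr ⟨hu, [], ?_⟩⟩
  exact ⟨.cons huy.symm (.singleton G u), by simp, by simp⟩

theorem degIn_univ_le_of_reachableIn (hZ : Z ⊆ Ω) (hu : u ∈ Z) (hux : G.Adj u x)
    (h : ReachableIn G (Ω \ Z) x y) :
    degIn G Finset.univ y ≤ degIn G Ω y + (entrants G Ω Z u).card := by
  obtain ⟨l, hl, hlU⟩ := h
  refine degIn_le_degIn_add_card fun w _ hyw => or_iff_not_imp_left.mpr fun hw =>
    mem_entrants.mpr ⟨mem_outerBoundary.mpr ⟨hw, y, (hlU y hl.last_mem).1, hyw.symm⟩, ?_⟩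
  have hwalk : IsListWalk G w u (w :: (l.reverse ++ [u])) :=
    .cons hyw.symm (hl.reverse.concat hux.symm)
  obtain ⟨u', hu', s, hs, hmem, -⟩ := hwalk.exists_isPathThrough (fun h => hw (hZ h)) hu
    fun v hv => by
      rcases List.mem_append.mp hv with hv | hv
      · exact (hlU v (List.mem_reverse.mp hv)).1
      · exact List.mem_singleton.mp hv ▸ hZ hu
  rcases List.mem_append.mp hmem with hmem | hmem
  · exact absurd hu' (hlU u' (List.mem_reverse.mp hmem)).2
  · exact mem_entrances.mpr ⟨hu, s, List.mem_singleton.mp hmem ▸ hs⟩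

end Entrants

section ExcessOfDegree

variable {G : SimpleGraph V} {S : Finset V} {Q Q₀ : List V} {y z : V} {δ t : ℕ}

theorem exists_isLongestCycleIn (h : IsListCycle G Q₀) (hmem : ∀ x ∈ Q₀, x ∈ S) :
    ∃ Q, IsLongestCycleIn G S Q ∧ Q₀.length ≤ Q.length := by
  classical
  have hle : ∀ Q, IsListCycle G Q → (∀ x ∈ Q, x ∈ S) → Q.length ≤ S.card := fun Q hQ hQS => by
    rw [← List.toFinset_card_of_nodup hQ.nodup]
    exact Finset.card_le_card fun x hx => hQS x (List.mem_toFinset.mp hx)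
  obtain ⟨Q, ⟨hQ, hQS⟩, hmax⟩ := (measure fun l : List V => S.card - l.length).wf.has_min
    {Q | IsListCycle G Q ∧ ∀ x ∈ Q, x ∈ S} ⟨Q₀, h, hmem⟩
  have hlong : ∀ Q', IsListCycle G Q' → (∀ x ∈ Q', x ∈ S) → Q'.length ≤ Q.length :=
    fun Q' hQ' hQS' => by
      have hmax' : ¬ S.card - Q'.length < S.card - Q.length := hmax Q' ⟨hQ', hQS'⟩
      have := hle Q' hQ' hQS'
      lia
  exact ⟨Q, ⟨hQ, hQS, hlong⟩, hlong Q₀ h hmem⟩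

theorem IsListCycle.exists_arcs_of_not_hasPathIn [DecidableEq V] (h : IsListCycle G Q)
    (hy : y ∈ Q) (hz : z ∈ Q) (hyz : y ≠ z) (hpath : ¬ HasPathIn G Q.toFinset (t + 1) y z) :
    ∃ A B, (y :: (A ++ z :: B)).Perm Q ∧ A.length + 2 ≤ t ∧ B.length + 2 ≤ t ∧
      ∀ A₁ p A₂ B₁ r B₂, A = A₁ ++ p :: A₂ → B = B₁ ++ r :: B₂ →
        A₁.length + B₁.length + 1 = Q.length - t →
        degIn G Q.toFinset p + degIn G Q.toFinset r ≤ Q.length := by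
  obtain ⟨A, B, hcyc, hperm⟩ := h.exists_perm_arcs hy hz hyz
  have hset := List.toFinset_eq_of_perm _ _ hperm
  have hlen := hperm.length_eq
  simp only [List.length_cons, List.length_append] at hlen
  have hshort : ∀ n, HasPathIn G (y :: (A ++ z :: B)).toFinset n y z → n ≤ t := fun n hn => by
    by_contra! hlt
    exact hpath (hn.mono hset.le hlt)
  refine ⟨A, B, hperm, hshort _ hcyc.hasPathIn_arc, hshort _ hcyc.hasPathIn_arc', ?_⟩
  rintro A₁ p A₂ B₁ r B₂ rfl rfl hpos
  by_contra! hdeg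
  rw [← hset] at hdeg
  have := hshort _ (hcyc.hasPathIn_of_degIn_add (by lia))
  simp only [List.length_append, List.length_cons] at hlen
  lia

/-- Crossing chords from the ends of a `y`–`z` path bound the degrees of `|Q| - t` disjoint pairs of
vertices, one on each arc of `Q`; each such pair contributes to the sum of `L`. -/
theorem IsListCycle.le_sum_of_not_hasPathIn [DecidableEq V] (h : IsListCycle G Q)
    (hQ : t < Q.length) (hy : y ∈ Q) (hz : z ∈ Q) (hyz : y ≠ z)
    (hpath : ¬ HasPathIn G Q.toFinset (t + 1) y z) (L : V → ℕ)
    (hL : ∀ u ∈ Q, δ + 1 ≤ L u + t ∨ δ ≤ L u + degIn G Q.toFinset u) :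
    (Q.length - t : ℤ) ^ 2 + Q.length * (δ - Q.length + 1) ≤ ∑ u ∈ Q.toFinset, (L u : ℤ) := by
  obtain ⟨A, B, hperm, hA, hB, hpair⟩ := h.exists_arcs_of_not_hasPathIn hy hz hyz hpath
  set f : V → ℤ := fun u => L u - (δ - Q.length + 1)
  have hf : ∀ u ∈ Q, 0 ≤ f u := fun u hu => by
    have := degIn_lt_card (G := G) (List.mem_toFinset.mpr hu)
    rw [List.toFinset_card_of_nodup h.nodup] at this
    have := hL u hu
    grind
  have hlen := hperm.length_eq
  simp only [List.length_cons, List.length_append] at hlen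
  have harcs := mul_le_sum_map_add_sum_map (A := A) (B := B) (f := f) (j := Q.length - t)
    (e := Q.length - t) (fun x hx => hf x (hperm.subset (by simp [hx])))
    (fun x hx => hf x (hperm.subset (by simp [hx]))) (by lia) (by lia)
    fun A₁ p A₂ B₁ r B₂ hp hr hj => by
      have hpQ : p ∈ Q := hperm.subset (by simp [hp])
      have hrQ : r ∈ Q := hperm.subset (by simp [hr])
      have := hpair A₁ p A₂ B₁ r B₂ hp hr hj
      have := hL p hpQ
      have := hL r hrQ
      have := hf p hpQ
      have := hf r hrQ
      grind
  have hsum : ∑ u ∈ Q.toFinset, f u = f y + f z + ((A.map f).sum + (B.map f).sum) := by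
    rw [List.sum_toFinset f h.nodup, ← (hperm.map f).sum_eq]
    simp only [List.map_cons, List.map_append, List.sum_cons, List.sum_append]
    ring
  have hsum' : ∑ u ∈ Q.toFinset, f u =
      ∑ u ∈ Q.toFinset, (L u : ℤ) - Q.length * (δ - Q.length + 1) := by
    simp [f, Finset.sum_sub_distrib, List.toFinset_card_of_nodup h.nodup]
  rw [Nat.cast_sub hQ.le] at harcs
  linarith [hf y hy, hf z hz]

end ExcessOfDegree

section LongestCycleOutside

variable [Fintype V] {G : SimpleGraph V} {H Ω : Finset V} {C Q : List V} {u : V} {δ t : ℕ}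

theorem le_card_outerBoundary_add (hδ : ∀ v, δ ≤ degIn G Finset.univ v) (hΩ : Ω.Nonempty)
    (hS : ¬ HasLinkedSet G Ω t) : δ + 1 ≤ (outerBoundary G Ω).card + t := by
  obtain ⟨x, hx, hxt⟩ : ∃ x ∈ Ω, degIn G Ω x < t := by
    by_contra! hcon
    exact hS (hasLinkedSet_of_forall_le_degIn hΩ hcon)
  have := degIn_le_degIn_add_card (G := G) (x := x) (S := Ω) (T := Finset.univ)
    (U := outerBoundary G Ω) fun y _ hxy => or_iff_not_imp_left.mpr fun hy =>
      mem_outerBoundary.mpr ⟨hy, x, hx, hxy.symm⟩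
  have := hδ x
  lia

theorem IsLongestCycleIn.le_card_entrants_add [DecidableEq V] (hQ : IsLongestCycleIn G Ω Q)
    (hδ : ∀ v, δ ≤ degIn G Finset.univ v) (ht : 2 ≤ t) (hS : ¬ HasLinkedSet G Ω t) (hu : u ∈ Q) :
    δ + 1 ≤ (entrants G Ω Q.toFinset u).card + t ∨
      δ ≤ (entrants G Ω Q.toFinset u).card + degIn G Q.toFinset u := by
  have hZ : Q.toFinset ⊆ Ω := fun x hx => hQ.mem x (List.mem_toFinset.mp hx)
  have huZ := List.mem_toFinset.mpr hu
  by_cases hx : ∃ x ∈ Ω, x ∉ Q ∧ G.Adj u x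
  · obtain ⟨x, hxΩ, hxQ, hux⟩ := hx
    obtain ⟨v, ⟨l, hl, hlU⟩, hv⟩ := hQ.exists_reachableIn_degIn_lt ht hS hu hxΩ hxQ hux
    have := degIn_univ_le_of_reachableIn hZ huZ hux
      ⟨l, hl, fun w hw => ⟨(hlU w hw).2, by simpa using (hlU w hw).1⟩⟩
    have := hδ v
    exact Or.inl (by lia)
  · push Not at hx
    have := degIn_univ_le_of_mem (G := G) hZ huZ
    have : degIn G Ω u ≤ degIn G Q.toFinset u := degIn_le_degIn fun y hy huy => by
      by_contra hyQ
      exact hx y hy (by simpa using hyQ) huy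
    have := hδ u
    exact Or.inr (by lia)

theorem IsLongestCycleIn.mul_le_length_of_isLongestCycleIn (hC : IsLongestCycleIn G Set.univ C)
    (hH : ∀ v, v ∈ H ↔ v ∉ C) (hQ : IsLongestCycleIn G H Q)
    (hδ : ∀ v, δ ≤ degIn G Finset.univ v) (ht : 2 ≤ t) (htδ : 2 * (t + 1) ≤ δ)
    (hS : ¬ HasLinkedSet G H t) (htQ : t < Q.length) : (t + 2) * (δ - t) ≤ C.length := by
  classical
  have hcard : Q.toFinset.card = Q.length := List.toFinset_card_of_nodup hQ.cycle.nodup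
  obtain ⟨Ω, hΩ⟩ := exists_isMinBoundary G (Z := Q.toFinset) (H := H) fun x hx =>
    hQ.mem x (List.mem_toFinset.mp hx)
  have hSΩ : ¬ HasLinkedSet G Ω t := fun h => hS (h.mono hΩ.subset_right le_rfl)
  have hQΩ : IsLongestCycleIn G Ω Q := ⟨hQ.cycle, fun x hx => hΩ.subset_left (by simpa using hx),
    fun Q' hQ' hmem => hQ.length_le Q' hQ' fun x hx => hΩ.subset_right (hmem x hx)⟩
  have hboundary : δ + 1 ≤ (outerBoundary G Ω).card + t := le_card_outerBoundary_add hδ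
    (Finset.Nonempty.mono hΩ.subset_left (Finset.card_pos.mp (by lia))) hSΩ
  obtain ⟨φ, hφ, hφC, hear⟩ := hΩ.exists_feet hH
  have hlen := hC.sum_le_length hφ hφC (fun y => (entrances G Ω Q.toFinset y).card + 1) (by lia)
    fun y hy y' hy' hyy' => by
      obtain ⟨n, hn, hle⟩ := hΩ.exists_hasPathThrough_card_entrances hQ hy hy' hyy'
      exact ⟨n, hear y hy y' hy' hyy' n hn, hle⟩
  rw [Finset.sum_add_distrib, sum_card_entrances, Finset.sum_const, smul_eq_mul, mul_one] at hlen
  obtain ⟨y, hy, z, hz, hyz, hpath⟩ : ∃ y ∈ Q, ∃ z ∈ Q, y ≠ z ∧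
      ¬ HasPathIn G Q.toFinset (t + 1) y z := by
    by_contra! hcon
    exact hS (hQ.cycle.hasLinkedSet hQ.mem hcon)
  have hsum := hQ.cycle.le_sum_of_not_hasPathIn htQ hy hz hyz hpath _
    fun u hu => hQΩ.le_card_entrants_add hδ ht hSΩ hu
  zify [show t ≤ δ by lia] at hlen hboundary htδ htQ ⊢
  nlinarith [mul_nonneg (sub_nonneg.mpr htQ) (sub_nonneg.mpr htδ)]

end LongestCycleOutside

section LongCycle

variable {G : SimpleGraph V} {S : Finset V} {t : ℕ}

theorem exists_isListCycle_of_forall_le_degIn (hS : S.Nonempty) (ht : 2 ≤ t)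
    (h : ∀ x ∈ S, t ≤ degIn G S x) :
    ∃ Q, IsListCycle G Q ∧ (∀ x ∈ Q, x ∈ S) ∧ t < Q.length := by
  classical
  obtain ⟨a, ha⟩ := hS
  obtain ⟨l, e, hl, hnd, hlS, hend⟩ := exists_path_forall_perm_adj_mem G ha
  have hmem := hend l e hl (.refl l)
  have hpos : 0 < degIn G S e := by linarith [h e (hlS e hl.last_mem)]
  obtain ⟨x, hx⟩ := Finset.card_pos.mp hpos
  rw [Finset.mem_filter] at hx
  obtain ⟨m, p, m', rfl, hep, hm⟩ := exists_first_append (p := G.Adj e)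
    ⟨x, hmem x hx.1 hx.2, hx.2⟩
  have hnd' : (p :: m').Nodup := hnd.of_append_right
  have hle : degIn G S e < (p :: m').length := by
    rw [← List.toFinset_card_of_nodup hnd']
    refine (degIn_le_degIn fun y hy hey => ?_).trans_lt
      (degIn_lt_card (G := G) (List.mem_toFinset.mpr hl.of_append_cons.2.last_mem))
    exact List.mem_toFinset.mpr
      ((List.mem_append.mp (hmem y hy hey)).resolve_left fun hym => hm y hym hey)
  have hlen := h e (hlS e hl.last_mem)
  exact ⟨p :: m', ⟨by lia, hnd', p, e, hl.of_append_cons.2, hep⟩,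
    fun v hv => hlS v (List.mem_append_right m hv), by lia⟩

end LongCycle

section WalkCycles

variable {G : SimpleGraph V} {H : Finset V} {W : Set V} {n t : ℕ}

theorem exists_isListCycle_of_isCycle {v : V} {w : G.Walk v v} (hw : w.IsCycle) :
    ∃ Q, IsListCycle G Q ∧ Q.length = w.length ∧ ∀ x, x ∈ Q ↔ x ∈ w.support := by
  rcases w with _ | ⟨h, p⟩
  · exact absurd hw Walk.not_isCycle_nil
  · refine ⟨p.support, ⟨by simpa using hw.three_le_length,
      ((Walk.cons_isCycle_iff p h).mp hw).1.support_nodup, _, _, isListWalk_support p, h⟩,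
      by simp, fun x => ?_⟩
    rw [Walk.support_cons, List.mem_cons, iff_or_self]
    rintro rfl
    exact p.end_mem_support

theorem IsListCycle.exists_isCycle {Q : List V} (h : IsListCycle G Q) :
    ∃ (v : V) (w : G.Walk v v), w.IsCycle ∧ w.length = Q.length := by
  obtain ⟨hthree, hnd, a, b, hQ, hba⟩ := h
  obtain ⟨p, rfl⟩ := hQ.exists_walk
  refine ⟨b, .cons hba p, ?_, by simp⟩
  rw [Walk.isCycle_iff_isPath_tail_and_le_length, Walk.isPath_def]
  exact ⟨by simpa using hnd, by simpa using hthree⟩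

theorem exists_isLongestCycleIn_of_isLongestCycle {v : V} {w : G.Walk v v}
    (hw : IsLongestCycle w) : ∃ C, IsLongestCycleIn G Set.univ C ∧ C.length = w.length ∧
      ∀ x, x ∈ C ↔ x ∈ w.support := by
  obtain ⟨C, hC, hlen, hmem⟩ := exists_isListCycle_of_isCycle hw.1
  refine ⟨C, ⟨hC, fun x _ => Set.mem_univ x, fun Q hQ _ => ?_⟩, hlen, hmem⟩
  obtain ⟨u, w', hw', hlen'⟩ := hQ.exists_isCycle
  exact hlen' ▸ hlen ▸ hw.2 u w' hw'

theorem _root_.ExtCycle.exists_isListCycle_of_not_hasLinkedSet (hW : ExtCycle G W n)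
    (hWH : ∀ x ∈ W, x ∈ H) (htn : t < n) (ht : ¬ HasLinkedSet G H t) :
    2 ≤ t ∧ ∃ Q, IsListCycle G Q ∧ (∀ x ∈ Q, x ∈ H) ∧ t < Q.length := by
  rcases hW with ⟨rfl, v, rfl⟩ | ⟨rfl, u, v, huv, rfl⟩ | ⟨hn, v, w, hw, rfl, rfl⟩
  · exact absurd ((hasLinkedSet_zero G (hWH v rfl)).mono subset_rfl (by lia)) ht
  · exact absurd ((hasLinkedSet_one (hWH u (by simp)) (hWH v (by simp)) huv).mono subset_rfl
      (by lia)) ht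
  · obtain ⟨Q, hQ, hlen, hmem⟩ := exists_isListCycle_of_isCycle hw
    have hQH : ∀ x ∈ Q, x ∈ H := fun x hx => hWH x ((hmem x).mp hx)
    refine ⟨?_, Q, hQ, hQH, by lia⟩
    by_contra! hlt
    exact ht (hQ.hasLinkedSet_of_two_mul_le hQH (by lia))

end WalkCycles

section LowerBound

variable [Fintype V] {G : SimpleGraph V} {H : Finset V} {C : List V} {W : Set V} {δ n t : ℕ}

theorem IsLongestCycleIn.mul_le_length_of_le_degIn (hC : IsLongestCycleIn G Set.univ C)
    (hH : ∀ v, v ∈ H ↔ v ∉ C) (hδ : ∀ v, δ ≤ degIn G Finset.univ v) (htδ : 2 * (t + 1) ≤ δ)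
    (hν : ∀ Ω, Ω.Nonempty → Ω ⊆ H → t + 2 ≤ (outerBoundary G Ω).card)
    (ht : HasLinkedSet G H t) : (t + 2) * (δ - t) ≤ C.length := by
  by_cases hbig : HasLinkedSet G H (δ - t - 2)
  · have := hC.mul_le_length_of_hasLinkedSet hH hν (by lia) hbig
    rwa [Nat.sub_add_cancel (by lia)] at this
  obtain ⟨d, htd, hd, hd'⟩ : ∃ d ≥ t, HasLinkedSet G H d ∧ ¬ HasLinkedSet G H (d + 1) := by
    by_contra! hstep
    exact hbig (Nat.le_induction (P := fun d _ => HasLinkedSet G H d) ht hstep _ (by lia))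
  have hdδ : d < δ - t - 2 := by
    by_contra! hle
    exact hbig (hd.mono subset_rfl hle)
  have hlen := hC.mul_le_length_of_hasLinkedSet (ν := δ - d) hH (fun Ω hne hΩ => by
    have := le_card_outerBoundary_add hδ hne fun h => hd' (h.mono hΩ le_rfl)
    lia) (by lia) hd
  refine le_trans ?_ hlen
  have htd' : t + d + 2 ≤ δ := by lia
  zify [show t ≤ δ by lia, show d ≤ δ by lia] at htd htd' ⊢
  nlinarith [mul_nonneg (sub_nonneg.mpr htd) (sub_nonneg.mpr htd')]

theorem IsLongestCycleIn.mul_le_length_of_extCycle (hC : IsLongestCycleIn G Set.univ C)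
    (hH : ∀ v, v ∈ H ↔ v ∉ C) (hδ : ∀ v, δ ≤ degIn G Finset.univ v) (htδ : 2 * (t + 1) ≤ δ)
    (hν : ∀ Ω, Ω.Nonempty → Ω ⊆ H → t + 2 ≤ (outerBoundary G Ω).card)
    (hW : ExtCycle G W n) (hWH : ∀ x ∈ W, x ∈ H) (htn : t < n) :
    (t + 2) * (δ - t) ≤ C.length := by
  by_cases ht : HasLinkedSet G H t
  · exact hC.mul_le_length_of_le_degIn hH hδ htδ hν ht
  · obtain ⟨ht₂, Q₀, hQ₀, hQ₀H, htQ₀⟩ :=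
      hW.exists_isListCycle_of_not_hasLinkedSet hWH htn ht
    obtain ⟨Q, hQ, hle⟩ := exists_isLongestCycleIn hQ₀ hQ₀H
    exact hC.mul_le_length_of_isLongestCycleIn hH hQ hδ ht₂ htδ ht (htQ₀.trans_le hle)

end LowerBound

section Connectivity

variable [Fintype V] {G : SimpleGraph V} {W : Set V} {Ω T : Finset V} {k n t : ℕ} {v : V}
  {w : G.Walk v v}

theorem kConnected_connectivity (h : 0 < connectivity G) : KConnected G (connectivity G) := by
  have hne : {k | KConnected G k}.Nonempty := by
    by_contra hempty
    rw [connectivity, Set.not_nonempty_iff_eq_empty.mp hempty, csSup_empty] at h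
    exact h.false
  exact Nat.sSup_mem hne ⟨Fintype.card V, fun k (hk : KConnected G k) => hk.1.le⟩

theorem _root_.KConnected.le_card_outerBoundary (hk : KConnected G k) (hΩ : Ω.Nonempty)
    (hT : Disjoint Ω T) (hkT : k ≤ T.card) : k ≤ (outerBoundary G Ω).card := by
  by_contra! hlt
  obtain ⟨z, hzT, hz⟩ : ∃ z ∈ T, z ∉ outerBoundary G Ω :=
    Finset.exists_mem_notMem_of_card_lt_card (hlt.trans_le hkT)
  obtain ⟨x, hx⟩ := hΩ
  have hx' : x ∉ outerBoundary G Ω := fun h => (mem_outerBoundary.mp h).1 hx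
  obtain ⟨p⟩ := (hk.2 _ hlt).preconnected ⟨x, hx'⟩ ⟨z, hz⟩
  obtain ⟨d, -, hd, hd'⟩ := p.exists_boundary_dart {v | (v : V) ∈ Ω} hx
    (Finset.disjoint_right.mp hT hzT)
  exact d.snd.2 (mem_outerBoundary.mpr ⟨hd', d.fst, hd, d.adj.symm⟩)

theorem _root_.KConnected.le_degree [DecidableRel G.Adj] (hk : KConnected G k) (v : V) :
    k ≤ G.degree v := by
  classical
  have hcard : k ≤ (Finset.univ.erase v).card := by
    rw [Finset.card_erase_of_mem (Finset.mem_univ v), Finset.card_univ]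
    have := hk.1
    lia
  refine (hk.le_card_outerBoundary (Finset.singleton_nonempty v) (by simp) hcard).trans
    (Finset.card_le_card fun y hy => ?_)
  simp only [mem_outerBoundary, Finset.mem_singleton, exists_eq_left] at hy
  exact (G.mem_neighborFinset v y).mpr hy.2.symm

theorem degIn_univ [DecidableRel G.Adj] (v : V) : degIn G Finset.univ v = G.degree v := by
  rw [degIn, ← card_neighborFinset_eq_degree]
  congr 1
  ext x
  simp

theorem _root_.IsLongestCycle.length_le_circumference (hw : IsLongestCycle w) :
    w.length ≤ circumference G :=
  le_csSup ⟨w.length, by rintro _ ⟨u, w', hw', rfl⟩; exact hw.2 u w' hw'⟩ ⟨v, w, hw.1, rfl⟩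

theorem _root_.IsLongestCycle.mul_le_length_of_extCycle [DecidableRel G.Adj] (hw : IsLongestCycle w)
    (hκ : t + 2 ≤ connectivity G) (htδ : 2 * (t + 1) ≤ G.minDegree) (hW : ExtCycle G W n)
    (hWw : ∀ x ∈ W, x ∉ w.support) (htn : t < n) :
    (t + 2) * (G.minDegree - t) ≤ w.length := by
  classical
  obtain ⟨C, hC, hlen, hmem⟩ := exists_isLongestCycleIn_of_isLongestCycle hw
  have hconn := kConnected_connectivity (by lia : 0 < connectivity G)
  have hδ : ∀ v, G.minDegree ≤ degIn G Finset.univ v := fun v =>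
    degIn_univ (G := G) v ▸ G.minDegree_le_degree v
  have : Nonempty V := ⟨v⟩
  have hκδ : connectivity G ≤ G.minDegree :=
    G.le_minDegree_of_forall_le_degree _ hconn.le_degree
  obtain ⟨Q, hQ, -, hlong⟩ := exists_isListCycle_of_forall_le_degIn Finset.univ_nonempty
    (by lia) fun v _ => hδ v
  have hκC : connectivity G ≤ C.toFinset.card := by
    rw [List.toFinset_card_of_nodup hC.cycle.nodup]
    have := hC.length_le Q hQ fun x _ => Set.mem_univ x
    lia
  have hH : ∀ v, v ∈ C.toFinsetᶜ ↔ v ∉ C := fun v => by simp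
  rw [← hlen]
  refine hC.mul_le_length_of_extCycle hH hδ htδ (fun Ω hne hΩ => hκ.trans ?_) hW
    (fun x hx => (hH x).mpr ((hmem x).not.mpr (hWw x hx))) htn
  exact hconn.le_card_outerBoundary hne (Finset.subset_compl_iff_disjoint_right.mp hΩ) hκC

theorem add_one_mul_sub_add_one_eq {l t δ : ℕ} (h : min l (δ - l) = t + 1) :
    ((l : ℤ) + 1) * (δ - l + 1) = (t + 2) * (δ - t) := by
  rcases le_total l (δ - l) with hl | hl
  · obtain rfl : l = t + 1 := by lia
    push_cast
    ring
  · rw [show (δ : ℤ) = l + t + 1 by lia]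
    ring

end Connectivity

end CDCycle

theorem nikoghosyan_2009_CD' (G : SimpleGraph V) [Fintype V] [DecidableRel G.Adj]
    (l : ℕ) (hl : 1 ≤ l) (hκ : l + 1 ≤ connectivity G) :
    (circumference G : ℤ) ≥ (l + 1) * ((G.minDegree : ℤ) - l + 1) ∨
      ∀ (v : V) (w : G.Walk v v), IsLongestCycle w →
        IsCDCycle G w (min l (G.minDegree - l)) := by
  refine or_iff_not_imp_right.mpr fun hcd => ?_
  simp only [IsCDCycle, not_forall] at hcd
  obtain ⟨v, w, hw, hcd⟩ := hcd
  obtain ⟨W, n, hW, hn, hWw⟩ : ∃ W n, ExtCycle G W n ∧ min l (G.minDegree - l) ≤ n ∧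
      ∀ x ∈ W, x ∉ w.support := by
    by_contra! hmeet
    exact hcd ⟨hw.1, hmeet⟩
  have : Nonempty V := ⟨v⟩
  have hlδ : l + 1 ≤ G.minDegree := G.le_minDegree_of_forall_le_degree _ fun u =>
    hκ.trans ((CDCycle.kConnected_connectivity (by lia)).le_degree u)
  obtain ⟨t, ht⟩ : ∃ t, min l (G.minDegree - l) = t + 1 := Nat.exists_eq_add_one.mpr (by lia)
  have hlen := hw.mul_le_length_of_extCycle (by lia : t + 2 ≤ connectivity G)
    (by lia) hW hWw (by lia)
  have hcirc := hlen.trans hw.length_le_circumference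
  zify [show t ≤ G.minDegree by lia] at hcirc
  exact (CDCycle.add_one_mul_sub_add_one_eq ht).trans_le hcirc
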